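/- Let S = ℤ[X,Y] localized at the maximal ideal (3, X, Y), with fraction field L, and let f = −5X³ + 9 and g = −2Y³ + 9. Then f and g are square-free elements of S forming a regular sequence, the field K obtained from L by adjoining cube roots ω of f and μ of g satisfies [K : L] = 9, and the integral closure R of S in K is not a Cohen-Macaulay ring; moreover R has projective dimension exactly 1 as an S-module. -/

import Mathlib

/-- A height one prime ideal of a commutative ring. -/
def IsHeightOnePrime {S : Type*} [CommRing S] (P : Ideal S) : Prop :=
  ∃ hP : P.IsPrime, Order.height (⟨P, hP⟩ : PrimeSpectrum S) = 1

/-- `c ∈ S` is square free if `P S_P = c S_P` for every height one prime `P` containing `c`. -/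
def PaperSquarefree {S : Type*} [CommRing S] (c : S) : Prop :=
  ∀ (P : Ideal S) (hP : P.IsPrime), Order.height (⟨P, hP⟩ : PrimeSpectrum S) = 1 → c ∈ P →
    haveI := hP
    Ideal.map (algebraMap S (Localization.AtPrime P)) P =
      Ideal.span {algebraMap S (Localization.AtPrime P) c}

/-- Two elements satisfy `𝒜₁` if no height one prime contains both of them. -/
def SatisfiesA1 {S : Type*} [CommRing S] (f g : S) : Prop :=
  ∀ P : Ideal S, IsHeightOnePrime P → ¬(f ∈ P ∧ g ∈ P)

/-- The depth of a module over a local ring: the supremum of the lengths of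
regular sequences on `M` contained in the maximal ideal. -/
noncomputable def modDepth (S : Type*) [CommRing S] [IsLocalRing S]
    (M : Type*) [AddCommGroup M] [Module S M] : ℕ∞ :=
  sSup {n : ℕ∞ | ∃ rs : List S, (rs.length : ℕ∞) = n ∧
    (∀ r ∈ rs, r ∈ IsLocalRing.maximalIdeal S) ∧ RingTheory.Sequence.IsRegular M rs}

/-- A commutative ring is Cohen-Macaulay if each of its localizations at a prime
has depth equal to its Krull dimension. -/
def IsCMRing (R : Type*) [CommRing R] : Prop :=
  ∀ (Q : Ideal R) (hQ : Q.IsPrime),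
    haveI := hQ
    (modDepth (Localization.AtPrime Q) (Localization.AtPrime Q) : WithBot ℕ∞) =
      ringKrullDim (Localization.AtPrime Q)

/-- The `n`-th symbolic power of a prime ideal `P`, i.e. `Pⁿ A_P ∩ A`. -/
noncomputable def symbPow {A : Type*} [CommRing A] (P : Ideal A) (hP : P.IsPrime) (n : ℕ) :
    Ideal A :=
  haveI := hP
  Ideal.comap (algebraMap A (Localization.AtPrime P))
    (Ideal.map (algebraMap A (Localization.AtPrime P)) (P ^ n))

/-- `ω`, as an element of the subalgebra `A = S[ω,μ]`. -/
noncomputable def omegaA {S : Type*} [CommRing S] {K : Type*} [Field K] [Algebra S K]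
    (ω μ : K) : Algebra.adjoin S ({ω, μ} : Set K) :=
  ⟨ω, Algebra.subset_adjoin (Set.mem_insert _ _)⟩

/-- `μ`, as an element of the subalgebra `A = S[ω,μ]`. -/
noncomputable def muA {S : Type*} [CommRing S] {K : Type*} [Field K] [Algebra S K]
    (ω μ : K) : Algebra.adjoin S ({ω, μ} : Set K) :=
  ⟨μ, Algebra.subset_adjoin (Set.mem_insert_of_mem _ rfl)⟩

/-- The ideal `P = (p, ω−h₁, μ−h₂)` of `A = S[ω,μ]`. -/
noncomputable def Pid {S : Type*} [CommRing S] {K : Type*} [Field K] [Algebra S K]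
    (p : ℕ) (ω μ : K) (h₁ h₂ : S) : Ideal (Algebra.adjoin S ({ω, μ} : Set K)) :=
  Ideal.span {(p : Algebra.adjoin S ({ω, μ} : Set K)),
    omegaA ω μ - algebraMap S _ h₁, muA ω μ - algebraMap S _ h₂}

/-- The colon module `(A :_K N) = {x ∈ K : x·N ⊆ A}`, as an `S`-submodule of `K`. -/
noncomputable def colonSubmodule (S : Type*) [CommRing S] (K : Type*) [Field K] [Algebra S K]
    (A : Subalgebra S K) (N : Set K) : Submodule S K where
  carrier := {x : K | ∀ z ∈ N, x * z ∈ A}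
  add_mem' := fun hx hy z hz => by
    simpa [add_mul] using add_mem (hx z hz) (hy z hz)
  zero_mem' := fun z hz => by simpa using A.zero_mem
  smul_mem' := fun c x hx z hz => by
    rw [Algebra.smul_def, mul_assoc]
    exact mul_mem (A.algebraMap_mem c) (hx z hz)

/-- `M` admits a free resolution `0 → Sⁿ → Sᵐ → M → 0`; for a finitely generated
module over a Noetherian local ring this says exactly `pd_S(M) ≤ 1`. -/
def HasFreeResLengthLE1 (S : Type*) [CommRing S] (M : Type*) [AddCommGroup M] [Module S M] :
    Prop :=
  ∃ (n m : ℕ) (φ : (Fin n → S) →ₗ[S] (Fin m → S)) (ψ : (Fin m → S) →ₗ[S] M),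
    Function.Injective φ ∧ Function.Surjective ψ ∧ LinearMap.range φ = LinearMap.ker ψ

/-- The ideal `Q` contains an `S`-regular sequence of length three, i.e. `Q` has grade
(at least) three. -/
def ContainsRegSeq3 (S : Type*) [CommRing S] (Q : Ideal S) : Prop :=
  ∃ rs : List S, rs.length = 3 ∧ (∀ r ∈ rs, r ∈ Q) ∧ RingTheory.Sequence.IsRegular S rs

/-- The maximal ideal `(3, X, Y)` of `ℤ[X,Y]`. -/
noncomputable def mvIdeal : Ideal (MvPolynomial (Fin 2) ℤ) :=
  Ideal.span {3, MvPolynomial.X 0, MvPolynomial.X 1}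


def SocAt {B : Type*} [CommRing B] (m I : Ideal B) : Prop :=
  ∃ e, e ∉ I ∧ ∀ q ∈ m, q * e ∈ I

lemma soc_swap {B : Type*} [CommRing B] {m J : Ideal B} {x y : B}
    (hy : y ∈ m) (hxr : ∀ b, x * b ∈ J → b ∈ J) (hyr : ∀ b, y * b ∈ J → b ∈ J)
    (h : SocAt m (J ⊔ Ideal.span {x})) : SocAt m (J ⊔ Ideal.span {y}) := by
  obtain ⟨e, he, hm⟩ := h
  have key : ∀ {a c : B}, a ∈ J ⊔ Ideal.span {c} ↔ ∃ j ∈ J, ∃ w, a = j + c * w := by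
    intro a c
    rw [Submodule.mem_sup]
    constructor
    · rintro ⟨j, hj, z, hz, rfl⟩
      obtain ⟨w, rfl⟩ := Ideal.mem_span_singleton'.1 hz
      exact ⟨j, hj, w, by ring⟩
    · rintro ⟨j, hj, w, rfl⟩
      exact ⟨j, hj, c * w, Ideal.mem_span_singleton'.2 ⟨w, by ring⟩, rfl⟩
  obtain ⟨j, hj, s, hs⟩ := key.1 (hm y hy)
  refine ⟨s, fun hmem => he ?_, fun r hr => ?_⟩
  · obtain ⟨j2, hj2, s', rfl⟩ := key.1 hmem
    have : e - x * s' ∈ J := hyr _ (by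
      have : y * (e - x * s') = j + x * j2 := by linear_combination hs
      rw [this]; exact J.add_mem hj (J.mul_mem_left _ hj2))
    exact key.2 ⟨_, this, s', by ring⟩
  · obtain ⟨j', hj', w, hw⟩ := key.1 (hm r hr)
    have : r * s - y * w ∈ J := hxr _ (by
      have : x * (r * s - y * w) = y * j' - r * j := by linear_combination y * hw - r * hs
      rw [this]; exact J.sub_mem (J.mul_mem_left _ hj') (J.mul_mem_left _ hj))
    exact key.2 ⟨_, this, w, by ring⟩

lemma exists_reg_both {B : Type*} [CommRing B] [IsNoetherianRing B] {m I J : Ideal B}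
    (hI : ¬ SocAt m I) (hJ : ¬ SocAt m J) :
    ∃ z ∈ m, (∀ b, z * b ∈ I → b ∈ I) ∧ (∀ b, z * b ∈ J → b ∈ J) := by
  by_contra! hcon
  have fin := (associatedPrimes.finite B (B ⧸ I)).union (associatedPrimes.finite B (B ⧸ J))
  have gen : ∀ (I : Ideal B) (z b : B), z * b ∈ I → b ∉ I →
      ∃ P ∈ associatedPrimes B (B ⧸ I), z ∈ P := by
    intro I z b h1 h2
    have := biUnion_associatedPrimes_eq_zero_divisors B (B ⧸ I)
    have hz : z ∈ {r : B | ∃ x : B ⧸ I, x ≠ 0 ∧ r • x = 0} := by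
      refine ⟨Ideal.Quotient.mk I b, ?_, ?_⟩
      · rwa [Ne, Ideal.Quotient.eq_zero_iff_mem]
      · rw [← Ideal.Quotient.mk_eq_mk, ← Submodule.Quotient.mk_smul, Ideal.Quotient.mk_eq_mk, Ideal.Quotient.eq_zero_iff_mem]
        exact h1
    rw [← this] at hz
    simpa using hz
  have sub : (m : Set B) ⊆ ⋃ P ∈ (associatedPrimes B (B ⧸ I) ∪ associatedPrimes B (B ⧸ J)), (id P : Ideal B) := by
    intro z hz
    simp only [Set.mem_iUnion]
    by_cases h : ∀ b, z * b ∈ I → b ∈ I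
    · obtain ⟨b, h1, h2⟩ := hcon z hz h
      obtain ⟨P, hP, hzP⟩ := gen J z b h1 h2
      exact ⟨P, Or.inr hP, hzP⟩
    · push Not at h
      obtain ⟨b, h1, h2⟩ := h
      obtain ⟨P, hP, hzP⟩ := gen I z b h1 h2
      exact ⟨P, Or.inl hP, hzP⟩
  obtain ⟨P, hP, hle⟩ := (Ideal.subset_union_prime_finite fin (f := id) ⊥ ⊥
    (fun P hP _ _ => by rcases hP with h | h <;> exact h.1)).1 sub
  have gen2 : ∀ I : Ideal B, P ∈ associatedPrimes B (B ⧸ I) → SocAt m I := by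
    intro I hP
    obtain ⟨hpr, x, hx⟩ := (isAssociatedPrime_iff_exists_injective_linearMap P _).1 hP
    have h0 : x (Ideal.Quotient.mk P 1) ≠ 0 := by
      intro h
      have := hx (h.trans (map_zero x).symm)
      rw [Ideal.Quotient.eq_zero_iff_mem] at this
      exact hpr.ne_top ((Ideal.eq_top_iff_one _).2 this)
    obtain ⟨e, he⟩ := Ideal.Quotient.mk_surjective (x (Ideal.Quotient.mk P 1))
    refine ⟨e, fun h => h0 (he ▸ Ideal.Quotient.eq_zero_iff_mem.2 h), fun q hq => ?_⟩
    rw [← Ideal.Quotient.eq_zero_iff_mem, ← smul_eq_mul, ← Ideal.Quotient.mk_eq_mk, Submodule.Quotient.mk_smul, Ideal.Quotient.mk_eq_mk, he, ← map_smul,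
      ← Ideal.Quotient.mk_eq_mk, ← Submodule.Quotient.mk_smul, Ideal.Quotient.mk_eq_mk,
      Ideal.Quotient.eq_zero_iff_mem.2 (by simpa using hle hq), map_zero]
  rcases hP with h | h
  · exact hI (gen2 I h)
  · exact hJ (gen2 J h)

lemma no_reg3 {B : Type*} [CommRing B] [IsDomain B] [IsNoetherianRing B] {m : Ideal B}
    {x1 x2 x3 y1 y2 : B} (hx1 : x1 ∈ m) (hx2 : x2 ∈ m) (hx3 : x3 ∈ m) (hy1 : y1 ∈ m)
    (hy2 : y2 ∈ m) (h1 : x1 ≠ 0) (hy0 : y1 ≠ 0)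
    (h2 : ∀ b, x2 * b ∈ Ideal.span {x1} → b ∈ Ideal.span {x1})
    (h3 : ∀ b, x3 * b ∈ Ideal.span {x1} ⊔ Ideal.span {x2} → b ∈ Ideal.span {x1} ⊔ Ideal.span {x2})
    (k2 : ∀ b, y2 * b ∈ Ideal.span {y1} → b ∈ Ideal.span {y1})
    (hs : SocAt m (Ideal.span {y1} ⊔ Ideal.span {y2})) : False := by
  obtain ⟨z, hz, hz1, hz2⟩ := exists_reg_both (m := m) (I := Ideal.span {x1}) (J := Ideal.span {y1})
    (fun ⟨e, he, hm⟩ => he (h2 e (hm _ hx2))) (fun ⟨e, he, hm⟩ => he (k2 e (hm _ hy2)))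
  have sw : ∀ a : B, a ≠ 0 → (∀ b, z * b ∈ Ideal.span {a} → b ∈ Ideal.span {a}) →
      ∀ b, a * b ∈ Ideal.span {z} → b ∈ Ideal.span {z} := by
    intro a ha hza b hb
    obtain ⟨c, hc⟩ := Ideal.mem_span_singleton'.1 hb
    obtain ⟨c', rfl⟩ := Ideal.mem_span_singleton'.1 (hza c (Ideal.mem_span_singleton'.2 ⟨b, by linear_combination -hc⟩))
    exact Ideal.mem_span_singleton'.2 ⟨c', mul_left_cancel₀ ha (by linear_combination hc)⟩
  have s1 := soc_swap hz k2 hz2 hs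
  rw [sup_comm] at s1
  have s2 := soc_swap hx1 (sw _ hy0 hz2) (sw _ h1 hz1) s1
  rw [sup_comm] at s2
  obtain ⟨e, he, hm⟩ := soc_swap hx2 hz1 h2 s2
  exact he (h3 e (hm _ hx3))

def modDepth' (S : Type*) [CommRing S] [IsLocalRing S]
    (M : Type*) [AddCommGroup M] [Module S M] : Set ℕ∞ :=
   {n : ℕ∞ | ∃ rs : List S, (rs.length : ℕ∞) = n ∧
    (∀ r ∈ rs, r ∈ IsLocalRing.maximalIdeal S) ∧ RingTheory.Sequence.IsRegular M rs}

lemma reg_elem {B : Type*} [CommRing B] {I : Ideal B} {r : B}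
   (h : IsSMulRegular (B ⧸ (I • ⊤ : Submodule B B)) r) : ∀ b, r * b ∈ I → b ∈ I := by
  intro b hb
  have hI : (I • ⊤ : Submodule B B) = I := by simp
  have := isSMulRegular_quotient_iff_mem_of_smul_mem _ _ |>.1 h b
  rw [hI] at this
  exact this hb

lemma depth_lt {B : Type*} [CommRing B] [IsDomain B] [IsNoetherianRing B] [IsLocalRing B]
    {y1 y2 : B} (hy1 : y1 ∈ IsLocalRing.maximalIdeal B) (hy2 : y2 ∈ IsLocalRing.maximalIdeal B)
    (hy0 : y1 ≠ 0)
    (k2 : ∀ b, y2 * b ∈ Ideal.span {y1} → b ∈ Ideal.span {y1})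
    (hs : SocAt (IsLocalRing.maximalIdeal B) (Ideal.span {y1} ⊔ Ideal.span {y2})) :
   ∀ n ∈ modDepth' B B, n ≤ 2 := by
  rintro n ⟨rs, rfl, hrs, hreg⟩
  by_contra hlt
  have hlt : 3 ≤ rs.length := by
    have : ¬ rs.length ≤ 2 := fun h => hlt (by exact_mod_cast h)
    omega
  obtain ⟨x1, x2, x3, rs', rfl⟩ : ∃ x1 x2 x3 rs', rs = x1 :: x2 :: x3 :: rs' := by
    match rs, hlt with
    | x1 :: x2 :: x3 :: rs', _ => exact ⟨_, _, _, _, rfl⟩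
  have r0 := reg_elem (hreg.regular_mod_prev 0 (by simp))
  have r1 := reg_elem (hreg.regular_mod_prev 1 (by simp))
  have r2 := reg_elem (hreg.regular_mod_prev 2 (by simp))
  simp [Ideal.ofList_cons] at r0 r1 r2 hrs
  have hx10 : x1 ≠ 0 := by
    rintro rfl
    exact one_ne_zero (r0 1 (by simp))
  refine no_reg3 (m := IsLocalRing.maximalIdeal B) (x1 := x1) (x2 := x2) (x3 := x3) (by simpa using hrs.1) (by simpa using hrs.2.1) (by simpa using hrs.2.2.1) hy1 hy2 hx10 hy0 r1 r2 k2 hs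


open Polynomial in
lemma cubic_facts {E K : Type*} [Field E] [Field K] [Algebra E K] {α : K} {e : E}
    (hα : α ^ 3 = algebraMap E K e) (hne : ∀ b : E, b ^ 3 ≠ e)
    (hgen : Algebra.adjoin E {α} = ⊤) :
    ∃ pb : PowerBasis E K, pb.gen = α ∧ pb.dim = 3 ∧ minpoly E α = X ^ 3 - C e := by
  have hirr := X_pow_sub_C_irreducible_of_prime Nat.prime_three hne
  have hmin : minpoly E α = X ^ 3 - C e :=
    (minpoly.eq_of_irreducible_of_monic hirr (by simp [hα]) (monic_X_pow_sub_C _ (by norm_num))).symm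
  have hint : IsIntegral E α := ⟨X ^ 3 - C e, monic_X_pow_sub_C _ (by norm_num), by simp [hα]⟩
  refine ⟨PowerBasis.ofAdjoinEqTop hint hgen, by simp, ?_, hmin⟩
  rw [PowerBasis.ofAdjoinEqTop_dim, hmin, natDegree_X_pow_sub_C]

lemma cubic_span {E K : Type*} [Field E] [Field K] [Algebra E K] {α : K} {e : E}
    (hα : α ^ 3 = algebraMap E K e) (hne : ∀ b : E, b ^ 3 ≠ e)
    (hgen : Algebra.adjoin E {α} = ⊤) (z : K) :
    ∃ a b c : E, z = algebraMap E K a + algebraMap E K b * α + algebraMap E K c * α ^ 2 := by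
  obtain ⟨pb, hg, hd, -⟩ := cubic_facts hα hne hgen
  have h := pb.basis.sum_repr z
  rw [← (finCongr hd.symm).sum_comp] at h
  simp [Fin.sum_univ_three, hg, Algebra.smul_def] at h
  exact ⟨_, _, _, h.symm⟩

lemma cubic_indep {E K : Type*} [Field E] [Field K] [Algebra E K] {α : K} {e : E}
    (hα : α ^ 3 = algebraMap E K e) (hne : ∀ b : E, b ^ 3 ≠ e)
    (a b c : E)
    (h : algebraMap E K a + algebraMap E K b * α + algebraMap E K c * α ^ 2 = 0) :
    a = 0 ∧ b = 0 ∧ c = 0 := by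
  have hirr := X_pow_sub_C_irreducible_of_prime Nat.prime_three hne
  have hmin : minpoly E α = Polynomial.X ^ 3 - Polynomial.C e :=
    (minpoly.eq_of_irreducible_of_monic hirr (by simp [hα]) (Polynomial.monic_X_pow_sub_C _ (by norm_num))).symm
  have hli := linearIndependent_pow (K := E) α
  rw [hmin, Polynomial.natDegree_X_pow_sub_C] at hli
  rw [Fintype.linearIndependent_iff] at hli
  have := hli ![a, b, c] (by simpa [Fin.sum_univ_three, Algebra.smul_def] using h)
  exact ⟨by simpa using this 0, by simpa using this 1, by simpa using this 2⟩

lemma cubic_finrank {E K : Type*} [Field E] [Field K] [Algebra E K] {α : K} {e : E}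
    (hα : α ^ 3 = algebraMap E K e) (hne : ∀ b : E, b ^ 3 ≠ e)
    (hgen : Algebra.adjoin E {α} = ⊤) : Module.finrank E K = 3 := by
  obtain ⟨pb, hg, hd, -⟩ := cubic_facts hα hne hgen
  rw [pb.finrank, hd]

open Polynomial in
lemma cubic_integral {S E K : Type*} [CommRing S] [Field E] [Field K] [Algebra E K]
    [Algebra S E] [Algebra S K] [IsScalarTower S E K] {α : K} {e : E}
    (hα : α ^ 3 = algebraMap E K e) (hne : ∀ b : E, b ^ 3 ≠ e)
    (hgen : Algebra.adjoin E {α} = ⊤) (a b c : E)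
    (h : IsIntegral S (algebraMap E K a + algebraMap E K b * α + algebraMap E K c * α ^ 2)) :
    IsIntegral S (3 * algebraMap E K a) ∧ IsIntegral S (3 * (algebraMap E K b * α)) ∧
    IsIntegral S (3 * (algebraMap E K c * α ^ 2)) := by
  obtain ⟨pb, hg, hd, hmin⟩ := cubic_facts hα hne hgen
  set Ω := AlgebraicClosure K
  obtain ⟨ζ, hζ⟩ : ∃ ζ : Ω, ζ ^ 2 + ζ + 1 = 0 := by
    obtain ⟨ζ, hζ⟩ := IsAlgClosed.exists_root (X ^ 2 + X + 1 : Polynomial Ω)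
      (by rw [show (X ^ 2 + X + 1 : Polynomial Ω).degree = 2 by compute_degree!]; norm_num)
    exact ⟨ζ, by simpa using hζ⟩
  have hζ3 : ζ ^ 3 = 1 := by linear_combination (ζ - 1) * hζ
  set A := algebraMap K Ω α
  have hA : A ^ 3 = algebraMap E Ω e := by
    rw [IsScalarTower.algebraMap_apply E K Ω, ← hα, map_pow]
  have hom : ∀ η : Ω, η ^ 3 = 1 → IsIntegral S (algebraMap E Ω a + algebraMap E Ω b * (η * A) +
      algebraMap E Ω c * (η * A) ^ 2) := by
    intro η hη
    let φ : K →ₐ[E] Ω := pb.lift (η * A) (by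
      rw [hg, hmin]; simp [mul_pow, hη, hA])
    have hφ : φ α = η * A := by rw [← hg]; exact pb.lift_gen _ _
    have := h.map (φ.restrictScalars S)
    simpa [hφ] using this
  have i1 := hom 1 (by simp)
  have i2 := hom ζ hζ3
  have i3 := hom (ζ ^ 2) (by rw [← pow_mul, mul_comm, pow_mul, hζ3, one_pow])
  have hζi : IsIntegral S ζ := by
    refine IsIntegral.of_pow (n := 3) (by norm_num) (by rw [hζ3]; exact isIntegral_one)
  have down : ∀ k : K, IsIntegral S (algebraMap K Ω k) → IsIntegral S k := fun k hk =>
    (isIntegral_algebraMap_iff (algebraMap K Ω).injective).1 hk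
  have tw : ∀ k : E, algebraMap K Ω (algebraMap E K k) = algebraMap E Ω k := fun k =>
    (IsScalarTower.algebraMap_apply E K Ω k).symm
  refine ⟨down _ ?_, down _ ?_, down _ ?_⟩
  · refine (congrArg (IsIntegral S) ?_).mpr ((i1.add i2).add i3)
    rw [map_mul, map_ofNat]; simp only [map_mul, map_pow, tw]
    linear_combination (-algebraMap E Ω b * A - algebraMap E Ω c * A ^ 2 * (ζ^2-ζ+1) )* hζ
  · refine (congrArg (IsIntegral S) ?_).mpr ((i1.add ((hζi.pow 2).mul i2)).add (hζi.mul i3))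
    rw [map_mul, map_ofNat]; simp only [map_mul, map_pow, tw]
    linear_combination (-algebraMap E Ω a  - algebraMap E Ω c * A ^ 2) * hζ - (2*algebraMap E Ω b * A +  algebraMap E Ω c * A ^ 2*(ζ+ζ^2)) * hζ3
  · refine (congrArg (IsIntegral S) ?_).mpr ((i1.add ((hζi).mul i2)).add ((hζi.pow 2).mul i3))
    rw [map_mul, map_ofNat]; simp only [map_mul, map_pow, tw]
    linear_combination (-algebraMap E Ω a  - algebraMap E Ω b * A ) * hζ - (algebraMap E Ω c * A ^ 2 * (2+ζ^3) +  algebraMap E Ω b * A*ζ) * hζ3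


lemma notcube_base {S L : Type*} [CommRing S] [IsDomain S] [IsIntegrallyClosed S] [Field L] [Algebra S L]
    [IsFractionRing S L] {b : L} {s : S} (h : b ^ 3 = algebraMap S L s) :
    ∃ t : S, algebraMap S L t = b ∧ t ^ 3 = s := by
  have hint : IsIntegral S b := IsIntegral.of_pow (n := 3) (by norm_num) (h ▸ isIntegral_algebraMap)
  obtain ⟨t, ht⟩ := IsIntegrallyClosed.isIntegral_iff.1 hint
  refine ⟨t, ht, IsFractionRing.injective S L ?_⟩
  rw [map_pow, ht, h]

lemma notcube_prime {S L : Type*} [CommRing S] [IsDomain S] [IsIntegrallyClosed S] [Field L] [Algebra S L]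
    [IsFractionRing S L] {F : S} (hF : Prime F) (b : L) : b ^ 3 ≠ algebraMap S L F := by
  intro h
  obtain ⟨t, -, ht⟩ := notcube_base h
  exact not_irreducible_pow (by norm_num) (ht ▸ hF.irreducible)

open IntermediateField in
lemma adj_gen_top {L K : Type*} [Field L] [Field K] [Algebra L K] {ω : K} (h : IsIntegral L ω) :
    Algebra.adjoin L {AdjoinSimple.gen L ω} = ⊤ := by
  have := (adjoin.powerBasis h).adjoin_gen_eq_top
  rwa [adjoin.powerBasis_gen] at this

open IntermediateField in
lemma notcube_adj {S L K : Type*} [CommRing S] [IsDomain S] [IsIntegrallyClosed S] [Field L] [Algebra S L]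
    [IsFractionRing S L] [Field K] [Algebra L K] (h3 : (3 : L) ≠ 0)
    {F G : S} (hF : Prime F) (hG : Prime G) (hGF : ¬ G ∣ F) {ω : K}
    (hω : ω ^ 3 = algebraMap L K (algebraMap S L F)) (b : L⟮ω⟯) :
    b ^ 3 ≠ algebraMap L L⟮ω⟯ (algebraMap S L G) := by
  intro hb
  have hint : IsIntegral L ω := IsIntegral.of_pow (n := 3) (by norm_num) (hω ▸ isIntegral_algebraMap)
  have hgen : (AdjoinSimple.gen L ω) ^ 3 = algebraMap L L⟮ω⟯ (algebraMap S L F) := by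
    apply Subtype.ext
    simpa using hω
  set θ := AdjoinSimple.gen L ω
  have hnF := notcube_prime (L := L) hF
  obtain ⟨a0, a1, a2, rfl⟩ := cubic_span hgen hnF (adj_gen_top hint) b
  set φ := algebraMap L L⟮ω⟯
  set f := algebraMap S L F with hf
  set g := algebraMap S L G with hg
  have hF0 : f ≠ 0 := fun h => hF.ne_zero (IsFractionRing.injective S L (by rw [map_zero]; exact h))
  have hG0 : g ≠ 0 := fun h => hG.ne_zero (IsFractionRing.injective S L (by rw [map_zero]; exact h))
  obtain ⟨e0, e1, e2⟩ := cubic_indep hgen hnF (a0 ^ 3 + f * a1 ^ 3 + f ^ 2 * a2 ^ 3 + 6 * f * a0 * a1 * a2 - g)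
    (3 * (a0 ^ 2 * a1 + f * a0 * a2 ^ 2 + f * a1 ^ 2 * a2)) (3 * (a0 ^ 2 * a2 + a0 * a1 ^ 2 + f * a1 * a2 ^ 2)) (by
      simp only [map_add, map_sub, map_mul, map_pow]
      rw [map_ofNat, map_ofNat]
      linear_combination hb - ((φ a1)^3 + (φ a2)^3 * (θ ^ 3 + φ f) + 6 * φ a0 * φ a1 * φ a2 + 3 * φ a0 * φ a2 ^ 2 * θ + 3 * φ a1 ^ 2 * φ a2 * θ + 3 * φ a1 * φ a2 ^ 2 * θ ^ 2) * hgen)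
  have e1 := (mul_eq_zero.1 e1).resolve_left h3
  have e2 := (mul_eq_zero.1 e2).resolve_left h3
  have hpos : ∀ (w : L) , w ^ 3 * f = g → False := by
    intro w hw
    obtain ⟨t, -, ht⟩ := notcube_base (S := S) (b := w * f) (s := G * F ^ 2) (by
      rw [map_mul, map_pow]; linear_combination f ^ 2 * hw)
    obtain ⟨r, rfl⟩ := hG.dvd_of_dvd_pow (show G ∣ t ^ 3 from ⟨F ^ 2, ht⟩)
    have : G * (G * r ^ 3) = F ^ 2 := mul_left_cancel₀ hG.ne_zero (by linear_combination ht)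
    exact hGF (hG.dvd_of_dvd_pow ⟨_, this.symm⟩)
  have hpos2 : ∀ (w : L) , w ^ 3 * f ^ 2 = g → False := by
    intro w hw
    obtain ⟨t, -, ht⟩ := notcube_base (S := S) (b := w * f) (s := G * F) (by
      rw [map_mul]; linear_combination f * hw)
    obtain ⟨r, rfl⟩ := hG.dvd_of_dvd_pow (show G ∣ t ^ 3 from ⟨F, ht⟩)
    have : G * (G * r ^ 3) = F := mul_left_cancel₀ hG.ne_zero (by linear_combination ht)
    exact hGF ⟨_, this.symm⟩
  have k : a0 * (f * a2 ^ 3 - a1 ^ 3) = 0 := by linear_combination a2 * e1 - a1 * e2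
  have hcase : a0 = 0 ∨ (a1 = 0 ∧ a2 = 0) := by
    rcases mul_eq_zero.1 k with h | h
    · exact Or.inl h
    · by_cases h2 : a2 = 0
      · right
        refine ⟨?_, h2⟩
        rw [h2] at h
        have : a1 ^ 3 = 0 := by linear_combination -h
        exact pow_eq_zero_iff (by norm_num) |>.1 this
      · exact absurd (show (a1 / a2) ^ 3 = f by field_simp; linear_combination -h) (hnF _)
  rcases hcase with rfl | ⟨rfl, rfl⟩
  · have : f * (a1 ^ 2 * a2) = 0 := by linear_combination e1
    have := (mul_eq_zero.1 this).resolve_left hF0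
    rcases mul_eq_zero.1 this with h | h
    · have h := pow_eq_zero_iff (by norm_num) |>.1 h
      subst h
      exact hpos2 a2 (by linear_combination e0)
    · subst h
      exact hpos a1 (by linear_combination e0)
  · exact notcube_prime hG a0 (by linear_combination e0)

lemma adj_top {L K : Type*} [Field L] [Field K] [Algebra L K] {ω μ : K}
    (h : Algebra.adjoin L ({ω, μ} : Set K) = ⊤) :
    Algebra.adjoin (IntermediateField.adjoin L {ω}) {μ} = ⊤ := by
  rw [eq_top_iff]
  intro z _
  have : Algebra.adjoin L ({ω, μ} : Set K) ≤ (Algebra.adjoin (IntermediateField.adjoin L {ω}) {μ}).restrictScalars L := by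
    rw [Algebra.adjoin_le_iff]
    have h1 : ω ∈ Algebra.adjoin (IntermediateField.adjoin L {ω}) {μ} := by
      have := Subalgebra.algebraMap_mem (Algebra.adjoin (IntermediateField.adjoin L {ω}) {μ})
        (IntermediateField.AdjoinSimple.gen L ω)
      rwa [IntermediateField.AdjoinSimple.algebraMap_gen] at this
    have h2 : μ ∈ Algebra.adjoin (IntermediateField.adjoin L {ω}) {μ} :=
      Algebra.subset_adjoin (Set.mem_singleton _)
    intro a ha
    rw [SetLike.mem_coe, Subalgebra.mem_restrictScalars]
    rcases ha with ha | ha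
    · rw [ha]; exact h1
    · rw [Set.mem_singleton_iff.1 ha]; exact h2
  exact this (h ▸ Algebra.mem_top)

open IntermediateField in
lemma kfacts {S L K : Type*} [CommRing S] [IsDomain S] [IsIntegrallyClosed S] [Field L] [Algebra S L]
    [IsFractionRing S L] [Field K] [Algebra L K] [Algebra S K] [IsScalarTower S L K] (h3 : (3 : L) ≠ 0)
    {F G : S} (hF : Prime F) (hG : Prime G) (hGF : ¬ G ∣ F) (hFG : ¬ F ∣ G) {ω μ : K}
    (hω : ω ^ 3 = algebraMap S K F) (hμ : μ ^ 3 = algebraMap S K G)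
    (hK : Algebra.adjoin L ({ω, μ} : Set K) = ⊤) :
    Module.finrank L K = 9 ∧
    (∀ z : K, ∃ c : Fin 3 → Fin 3 → L, z = ∑ i, ∑ j, algebraMap L K (c i j) * ω ^ (i : ℕ) * μ ^ (j : ℕ)) ∧
    (∀ c : Fin 3 → Fin 3 → L, ∑ i, ∑ j, algebraMap L K (c i j) * ω ^ (i : ℕ) * μ ^ (j : ℕ) = 0 → ∀ i j, c i j = 0) ∧
    (∀ c : Fin 3 → Fin 3 → L, IsIntegral S (∑ i, ∑ j, algebraMap L K (c i j) * ω ^ (i : ℕ) * μ ^ (j : ℕ)) → 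
      ∀ i j, IsIntegral S (9 * (algebraMap L K (c i j) * ω ^ (i : ℕ) * μ ^ (j : ℕ)))) := by
  rw [IsScalarTower.algebraMap_apply S L K] at hω hμ
  have hint : IsIntegral L ω := IsIntegral.of_pow (n := 3) (by norm_num) (hω ▸ isIntegral_algebraMap)
  have hgen : (AdjoinSimple.gen L ω) ^ 3 = algebraMap L L⟮ω⟯ (algebraMap S L F) := by
    apply Subtype.ext
    simpa using hω
  have n1 := notcube_prime (L := L) hF
  have n2 := notcube_adj h3 hF hG hGF hω
  have n3 := notcube_adj h3 hG hF hFG hμ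
  have g1 := adj_gen_top hint
  have g2 := adj_top hK
  have g3 := adj_top (Set.pair_comm ω μ ▸ hK)
  have hμ' : μ ^ 3 = algebraMap L⟮ω⟯ K (algebraMap L L⟮ω⟯ (algebraMap S L G)) := hμ
  have hω' : ω ^ 3 = algebraMap L⟮μ⟯ K (algebraMap L L⟮μ⟯ (algebraMap S L F)) := hω
  have q1 : ∀ a b c : L, algebraMap L⟮ω⟯ K (algebraMap L L⟮ω⟯ a + algebraMap L L⟮ω⟯ b * AdjoinSimple.gen L ω +
     algebraMap L L⟮ω⟯ c * AdjoinSimple.gen L ω ^ 2) = algebraMap L K a + algebraMap L K b * ω + algebraMap L K c * ω ^ 2 := fun a b c => rfl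
  have i1 : IsScalarTower S L⟮ω⟯ K := ⟨fun s a b => by
    change (s • (a : K)) * b = s • ((a : K) * b); exact smul_mul_assoc _ _ _⟩
  have i2 : IsScalarTower S L⟮μ⟯ K := ⟨fun s a b => by
    change (s • (a : K)) * b = s • ((a : K) * b); exact smul_mul_assoc _ _ _⟩
  refine ⟨?_, ?_, ?_, ?_⟩
  · rw [← Module.finrank_mul_finrank L L⟮ω⟯ K, cubic_finrank hgen n1 g1, cubic_finrank hμ' n2 g2]
  · intro z
    obtain ⟨a, b, c, rfl⟩ := cubic_span hμ' n2 g2 z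
    obtain ⟨a0, a1, a2, rfl⟩ := cubic_span hgen n1 g1 a
    obtain ⟨b0, b1, b2, rfl⟩ := cubic_span hgen n1 g1 b
    obtain ⟨c0, c1, c2, rfl⟩ := cubic_span hgen n1 g1 c
    refine ⟨![![a0, b0, c0], ![a1, b1, c1], ![a2, b2, c2]], ?_⟩
    simp only [q1]
    simp [Fin.sum_univ_three]
    ring
  · intro c hc
    obtain ⟨k0, k1, k2⟩ := cubic_indep hμ' n2 _ _ _ (show
      algebraMap L⟮ω⟯ K (algebraMap L L⟮ω⟯ (c 0 0) + algebraMap L L⟮ω⟯ (c 1 0) * AdjoinSimple.gen L ω +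
        algebraMap L L⟮ω⟯ (c 2 0) * AdjoinSimple.gen L ω ^ 2) + 
      algebraMap L⟮ω⟯ K (algebraMap L L⟮ω⟯ (c 0 1) + algebraMap L L⟮ω⟯ (c 1 1) * AdjoinSimple.gen L ω +
        algebraMap L L⟮ω⟯ (c 2 1) * AdjoinSimple.gen L ω ^ 2) * μ +
      algebraMap L⟮ω⟯ K (algebraMap L L⟮ω⟯ (c 0 2) + algebraMap L L⟮ω⟯ (c 1 2) * AdjoinSimple.gen L ω +
        algebraMap L L⟮ω⟯ (c 2 2) * AdjoinSimple.gen L ω ^ 2) * μ ^ 2 = 0 by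
        simp only [q1]
        rw [← hc]
        simp [Fin.sum_univ_three]
        ring)
    obtain ⟨k00, k10, k20⟩ := cubic_indep hgen n1 _ _ _ k0
    obtain ⟨k01, k11, k21⟩ := cubic_indep hgen n1 _ _ _ k1
    obtain ⟨k02, k12, k22⟩ := cubic_indep hgen n1 _ _ _ k2
    intro i j
    fin_cases i <;> fin_cases j <;> assumption
  · intro c hc
    have st1 : ∀ j : Fin 3, IsIntegral S (3 * ((algebraMap L K (c 0 j) + algebraMap L K (c 1 j) * ω + algebraMap L K (c 2 j) * ω ^ 2) * μ ^ (j : ℕ))) := by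
      obtain ⟨k0, k1, k2⟩ := cubic_integral (S := S) hμ' n2 g2 (algebraMap L L⟮ω⟯ (c 0 0) + algebraMap L L⟮ω⟯ (c 1 0) * AdjoinSimple.gen L ω +
        algebraMap L L⟮ω⟯ (c 2 0) * AdjoinSimple.gen L ω ^ 2) 
       (algebraMap L L⟮ω⟯ (c 0 1) + algebraMap L L⟮ω⟯ (c 1 1) * AdjoinSimple.gen L ω +
        algebraMap L L⟮ω⟯ (c 2 1) * AdjoinSimple.gen L ω ^ 2)
       (algebraMap L L⟮ω⟯ (c 0 2) + algebraMap L L⟮ω⟯ (c 1 2) * AdjoinSimple.gen L ω +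
        algebraMap L L⟮ω⟯ (c 2 2) * AdjoinSimple.gen L ω ^ 2) (by
        simp only [q1]
        refine (congrArg (IsIntegral S) ?_).mpr hc
        simp [Fin.sum_univ_three]
        ring)
      simp only [q1] at k0 k1 k2
      intro j
      fin_cases j
      · simpa using k0
      · simpa using k1
      · exact k2
    intro i j
    have hm : μ ∈ L⟮μ⟯ := mem_adjoin_simple_self L μ
    have q2 : ∀ a : L, algebraMap L⟮μ⟯ K (3 * (algebraMap L L⟮μ⟯ a * AdjoinSimple.gen L μ ^ (j : ℕ))) = 3 * (algebraMap L K a * μ ^ (j : ℕ)) := fun a => by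
      rw [map_mul, map_ofNat]; rfl
    obtain ⟨k0, k1, k2⟩ := cubic_integral (S := S) hω' n3 g3 (3 * (algebraMap L L⟮μ⟯ (c 0 j) * AdjoinSimple.gen L μ ^ (j : ℕ)))
      (3 * (algebraMap L L⟮μ⟯ (c 1 j) * AdjoinSimple.gen L μ ^ (j : ℕ))) (3 * (algebraMap L L⟮μ⟯ (c 2 j) * AdjoinSimple.gen L μ ^ (j : ℕ))) (by
        simp only [q2]
        refine (congrArg (IsIntegral S) ?_).mpr (st1 j)
        ring)
    simp only [q2] at k0 k1 k2
    fin_cases i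
    · refine (congrArg (IsIntegral S) ?_).mpr k0
      simp; ring
    · refine (congrArg (IsIntegral S) ?_).mpr k1
      simp; ring
    · refine (congrArg (IsIntegral S) ?_).mpr k2
      simp; ring

lemma nine_coeff {S L K : Type*} [CommRing S] [IsDomain S] [IsIntegrallyClosed S] [Field L] [Algebra S L]
    [IsFractionRing S L] [Field K] [Algebra L K] [Algebra S K] [IsScalarTower S L K]
    {F G : S} (hF : Prime F) (hG : Prime G) (hFG : ¬ F ∣ G) {ω μ : K}
    (hω : ω ^ 3 = algebraMap S K F) (hμ : μ ^ 3 = algebraMap S K G) (c : L) (i j : Fin 3)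
    (h : IsIntegral S (9 * (algebraMap L K c * ω ^ (i : ℕ) * μ ^ (j : ℕ)))) :
    ∃ n : S, algebraMap S L n = 9 * c := by
  have h1 : IsIntegral S (algebraMap L K ((9 * c) ^ 3 * algebraMap S L (F ^ (i : ℕ) * G ^ (j : ℕ)))) := by
    refine (congrArg (IsIntegral S) ?_).mpr (h.pow 3)
    rw [map_mul, map_pow, map_mul, map_ofNat, ← IsScalarTower.algebraMap_apply, map_mul, map_pow, map_pow, ← hω, ← hμ]
    ring
  rw [isIntegral_algebraMap_iff (algebraMap L K).injective] at h1
  obtain ⟨s, hs⟩ := IsIntegrallyClosed.isIntegral_iff.1 h1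
  have hi : ∃ a : ℕ, (i : ℕ) + (a + 1) = 3 := ⟨2 - i, by omega⟩
  have hj : ∃ a : ℕ, (j : ℕ) + (a + 1) = 3 := ⟨2 - j, by omega⟩
  obtain ⟨a, ha⟩ := hi
  obtain ⟨b, hb⟩ := hj
  obtain ⟨t, ht, ht3⟩ := notcube_base (S := S) (b := (9 * c) * algebraMap S L (F * G)) (s := s * F ^ (a+1) * G ^ (b+1)) (by
    have e1 : algebraMap S L F ^ (i : ℕ) * algebraMap S L F ^ (a+1) = algebraMap S L F ^ 3 := by
      rw [← pow_add, ha]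
    have e2 : algebraMap S L G ^ (j : ℕ) * algebraMap S L G ^ (b+1) = algebraMap S L G ^ 3 := by
      rw [← pow_add, hb]
    simp only [map_mul, map_pow] at hs ⊢
    rw [hs]
    linear_combination (-(9*c)^3 * algebraMap S L G ^ 3) * e1 - (9*c)^3 * (algebraMap S L F ^ (i : ℕ) * algebraMap S L F ^ (a+1)) * e2)
  obtain ⟨t1, rfl⟩ := hF.dvd_of_dvd_pow (show F ∣ t ^ 3 from ⟨s * F ^ a * G ^ (b+1), by rw [ht3]; ring⟩)
  have hG1 : G ∣ F * t1 := hG.dvd_of_dvd_pow (n := 3) (show G ∣ _ from ⟨s * F ^ (a+1) * G ^ b, by rw [ht3]; ring⟩)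
  obtain ⟨r, hr⟩ := hG1
  obtain ⟨r', rfl⟩ := (hF.dvd_or_dvd ⟨t1, hr.symm⟩).resolve_left hFG
  refine ⟨r', ?_⟩
  have h0 : algebraMap S L (F * G) ≠ 0 := by
    intro h
    rw [← map_zero (algebraMap S L)] at h
    exact mul_ne_zero hF.ne_zero hG.ne_zero (IsFractionRing.injective S L h)
  apply mul_right_cancel₀ h0
  rw [← ht, ← map_mul, hr]; congr 1; ring




structure SFacts {S : Type*} [CommRing S] (x y : S) : Prop where
  p3 : Prime (3 : S)
  pf : Prime (-5 * x ^ 3 + 9)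
  pg : Prime (-2 * y ^ 3 + 9)
  fg : ¬ (-5 * x ^ 3 + 9) ∣ (-2 * y ^ 3 + 9)
  gf : ¬ (-2 * y ^ 3 + 9) ∣ (-5 * x ^ 3 + 9)
  p3x : (Ideal.span {3, x}).IsPrime
  x3 : ¬ 3 ∣ x
  y3x : y ∉ Ideal.span {3, x}

open Polynomial in
lemma prime_cubic_aux (a p : ℕ) [Fact p.Prime] (ha : a = 5 ∧ p = 5 ∨ a = 2 ∧ p = 2) :
    Prime (-(a : Polynomial ℤ) * Polynomial.X ^ 3 + 9) := by
  have ha0 : a ≠ 0 := by rcases ha with h | h <;> simp [h.1]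
  rw [← irreducible_iff_prime]
  have hprim : (-(a : Polynomial ℤ) * Polynomial.X ^ 3 + 9).IsPrimitive := by
    intro r hr
    rw [C_dvd_iff_dvd_coeff] at hr
    have h0 := hr 0
    have h3 := hr 3
    have e3 : (-(a : Polynomial ℤ) * Polynomial.X ^ 3 + 9).coeff 3 = -(a : ℤ) := by
      rw [show (-(a : Polynomial ℤ) * Polynomial.X ^ 3 + 9) = C (-(a:ℤ)) * X ^ 3 + C 9 by simp]
      rw [coeff_add, coeff_C_mul_X_pow, coeff_C]; simp
    have e0 : (-(a : Polynomial ℤ) * Polynomial.X ^ 3 + 9).coeff 0 = 9 := by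
      rw [show (-(a : Polynomial ℤ) * Polynomial.X ^ 3 + 9) = C (-(a:ℤ)) * X ^ 3 + C 9 by simp]
      rw [coeff_add, coeff_C_mul_X_pow, coeff_C]; simp
    rw [e3] at h3; rw [e0] at h0
    rcases ha with h | h <;> rw [h.1] at h3
    · exact isUnit_of_dvd_one (by have := dvd_sub (h3.mul_left (-2)) h0; norm_num at this; exact this)
    · exact isUnit_of_dvd_one (by have := dvd_add h0 (h3.mul_left 4); norm_num at this; exact this)
  rw [Polynomial.IsPrimitive.Int.irreducible_iff_irreducible_map_cast hprim]
  have hirr : Irreducible (X ^ 3 - C ((9 : ℚ) / a)) := by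
    refine X_pow_sub_C_irreducible_of_prime Nat.prime_three ?_
    intro b hb
    have hv := congrArg (padicValRat p) hb
    have hb0 : b ≠ 0 := by rintro rfl; rw [zero_pow (by norm_num)] at hb; exact div_ne_zero (by norm_num) (by exact_mod_cast ha0) hb.symm
    rw [padicValRat.pow, padicValRat.div (by norm_num) (by exact_mod_cast ha0)] at hv
    have h9 : padicValRat p (9 : ℚ) = 0 := by
      have : padicValRat p ((9 : ℕ) : ℚ) = 0 := by
        rw [padicValRat.of_nat, padicValNat.eq_zero_of_not_dvd (by rcases ha with h | h <;> rw [h.2] <;> norm_num)]; rfl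
      exact_mod_cast this
    have ha1 : padicValRat p (a : ℚ) = 1 := by
      have : a = p := by rcases ha with h | h <;> rw [h.1, h.2]
      rw [this, padicValRat.of_nat, padicValNat_self]; rfl
    rw [h9, ha1] at hv
    push_cast at hv
    omega
  have : (map (Int.castRingHom ℚ) (-(a : Polynomial ℤ) * Polynomial.X ^ 3 + 9)) =
      C (-(a : ℚ)) * (X ^ 3 - C ((9 : ℚ) / a)) := by
    have : C (a : ℚ) * C ((9 : ℚ) / a) = C 9 := by
      rw [← C_mul, mul_div_cancel₀]; exact_mod_cast ha0
    rw [Polynomial.map_add, Polynomial.map_mul, Polynomial.map_neg, Polynomial.map_natCast, Polynomial.map_pow, map_X, C_neg, Polynomial.map_ofNat]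
    rw [show (9 : Polynomial ℚ) = C 9 from rfl]
    rw [mul_sub, neg_mul (C (a:ℚ)) (C _), this, C_eq_natCast]; ring
  rw [this]
  exact (irreducible_isUnit_mul (isUnit_C.2 (isUnit_iff_ne_zero.2 (by simpa using ha0)))).2 hirr

lemma prime_mv (i : Fin 2) (q : Polynomial ℤ) (hq : Prime q) :
    Prime (Polynomial.aeval (MvPolynomial.X i : MvPolynomial (Fin 2) ℤ) q) := by
  have h1 : Prime ((MvPolynomial.uniqueAlgEquiv ℤ ({i} : Set (Fin 2))).symm q) := by
    exact (MulEquiv.prime_iff (MvPolynomial.uniqueAlgEquiv ℤ ({i} : Set (Fin 2))).symm).2 hq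
  have h2 := (MvPolynomial.prime_rename_iff ({i} : Set (Fin 2))).2 h1
  convert h2 using 1
  have : (Polynomial.aeval (MvPolynomial.X i : MvPolynomial (Fin 2) ℤ)) =
    ((MvPolynomial.rename ((↑) : ({i} : Set (Fin 2)) → Fin 2) ).comp (MvPolynomial.uniqueAlgEquiv ℤ ({i} : Set (Fin 2))).symm.toAlgHom) := by
    ext1
    simp
  rw [this]; rfl

lemma mv_ker_X0 (p : MvPolynomial (Fin 2) ℤ) : 
   ∃ r, p = MvPolynomial.X 0 * r + MvPolynomial.rename (fun _ : Fin 1 => (1 : Fin 2)) (MvPolynomial.aeval (![0, MvPolynomial.X 0] : Fin 2 → MvPolynomial (Fin 1) ℤ) p) := by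
  induction p using MvPolynomial.induction_on with
  | C a => exact ⟨0, by simp⟩
  | add p q hp hq =>
    obtain ⟨r, hr⟩ := hp
    obtain ⟨s, hs⟩ := hq
    refine ⟨r + s, ?_⟩
    rw [map_add, map_add]
    linear_combination hr + hs
  | mul_X p i hp =>
    obtain ⟨r, hr⟩ := hp
    rw [map_mul, map_mul]
    fin_cases i
    · exact ⟨p, by simp; ring⟩
    · refine ⟨r * MvPolynomial.X 1, ?_⟩
      simp only [Fin.mk_one, MvPolynomial.aeval_X, Matrix.cons_val_one, Matrix.cons_val_zero, MvPolynomial.rename_X]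
      linear_combination MvPolynomial.X 1 * hr

lemma mv_three_ker {σ : Type*} [Finite σ] (p : MvPolynomial σ ℤ) :
   MvPolynomial.map (Int.castRingHom (ZMod 3)) p = 0 ↔ 3 ∣ p := by
  rw [show (3 : MvPolynomial σ ℤ) = MvPolynomial.C 3 by simp, MvPolynomial.C_dvd_iff_dvd_coeff, MvPolynomial.ext_iff]
  refine forall_congr' fun i => ?_
  rw [MvPolynomial.coeff_map]
  simp [ZMod.intCast_zmod_eq_zero_iff_dvd]

lemma mv_p3 : (Ideal.span {(3 : MvPolynomial (Fin 2) ℤ)}).IsPrime := by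
  have : (Ideal.span {(3 : MvPolynomial (Fin 2) ℤ)}) = RingHom.ker (MvPolynomial.map (σ := Fin 2) (Int.castRingHom (ZMod 3))) := by
    ext p
    rw [Ideal.mem_span_singleton, RingHom.mem_ker, mv_three_ker]
  rw [this]
  have : Fact (Nat.Prime 3) := ⟨Nat.prime_three⟩
  exact RingHom.ker_isPrime _

lemma mv_p3x_eq : (Ideal.span {(3 : MvPolynomial (Fin 2) ℤ), MvPolynomial.X 0}) = 
   RingHom.ker ((MvPolynomial.map (σ := Fin 1) (Int.castRingHom (ZMod 3))).comp 
     (MvPolynomial.aeval (![0, MvPolynomial.X 0] : Fin 2 → MvPolynomial (Fin 1) ℤ)).toRingHom) := by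
  ext p
  rw [RingHom.mem_ker, RingHom.comp_apply, mv_three_ker, Ideal.mem_span_pair]
  constructor
  · rintro ⟨a, b, rfl⟩
    rw [map_add, map_mul, map_mul, map_ofNat]
    simp
  · rintro ⟨q, hq⟩
    obtain ⟨r, hr⟩ := mv_ker_X0 p
    refine ⟨MvPolynomial.rename (fun _ : Fin 1 => (1 : Fin 2)) q, r, ?_⟩
    rw [AlgHom.toRingHom_eq_coe, RingHom.coe_coe] at hq
    rw [hq, map_mul, map_ofNat] at hr
    rw [hr]; ring

lemma mv_p3x : (Ideal.span {(3 : MvPolynomial (Fin 2) ℤ), MvPolynomial.X 0}).IsPrime := by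
  rw [mv_p3x_eq]
  have : Fact (Nat.Prime 3) := ⟨Nat.prime_three⟩
  exact RingHom.ker_isPrime _

lemma mv_y3x : MvPolynomial.X 1 ∉ (Ideal.span {(3 : MvPolynomial (Fin 2) ℤ), MvPolynomial.X 0}) := by
  rw [mv_p3x_eq, RingHom.mem_ker]
  simp

lemma mv_x3 : MvPolynomial.X 0 ∉ (Ideal.span {(3 : MvPolynomial (Fin 2) ℤ)}) := by
  rw [Ideal.mem_span_singleton, ← mv_three_ker]
  simp

lemma sfacts (hM : mvIdeal.IsPrime)
    {S : Type*} [CommRing S] [IsDomain S] [Algebra (MvPolynomial (Fin 2) ℤ) S]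
    [IsLocalization (mvIdeal.primeCompl (hp := hM)) S] :
    SFacts (algebraMap (MvPolynomial (Fin 2) ℤ) S (MvPolynomial.X 0)) (algebraMap (MvPolynomial (Fin 2) ℤ) S (MvPolynomial.X 1)) := by
  set x := (algebraMap (MvPolynomial (Fin 2) ℤ) S (MvPolynomial.X 0))
  set y := (algebraMap (MvPolynomial (Fin 2) ℤ) S (MvPolynomial.X 1))
  have m3 : (3 : MvPolynomial (Fin 2) ℤ) ∈ mvIdeal := Ideal.subset_span (by simp)
  have mx : (MvPolynomial.X 0 : MvPolynomial (Fin 2) ℤ) ∈ mvIdeal := Ideal.subset_span (by simp)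
  have my : (MvPolynomial.X 1 : MvPolynomial (Fin 2) ℤ) ∈ mvIdeal := Ideal.subset_span (by simp)
  have disj : ∀ I : Ideal (MvPolynomial (Fin 2) ℤ), I ≤ mvIdeal → Disjoint ((mvIdeal.primeCompl (hp := hM) : Set (MvPolynomial (Fin 2) ℤ))) I := by
    intro I hI
    rw [Set.disjoint_left]
    intro a ha hb
    exact ha (hI hb)
  have pr : ∀ I : Ideal (MvPolynomial (Fin 2) ℤ), I ≤ mvIdeal → I.IsPrime → (I.map (algebraMap _ S)).IsPrime :=
    fun I hI hp => IsLocalization.isPrime_of_isPrime_disjoint (mvIdeal.primeCompl (hp := hM)) S I hp (disj I hI)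
  have cm : ∀ I : Ideal (MvPolynomial (Fin 2) ℤ), I ≤ mvIdeal → I.IsPrime → ∀ a, algebraMap _ S a ∈ (I.map (algebraMap _ S)) → a ∈ I := by
    intro I hI hp a ha
    have := IsLocalization.under_map_of_isPrime_disjoint (mvIdeal.primeCompl (hp := hM)) S hp (disj I hI)
    rw [← this]; exact ha
  have inj : Function.Injective (algebraMap (MvPolynomial (Fin 2) ℤ) S) := 
    IsLocalization.injective S (@Ideal.primeCompl_le_nonZeroDivisors _ _ _ mvIdeal hM)
  have prel : ∀ a, a ∈ mvIdeal → Prime a → Prime (algebraMap _ S a) := by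
    intro a ha hp
    rw [← Ideal.span_singleton_prime ((map_ne_zero_iff _ inj).2 hp.ne_zero), ← Set.image_singleton, ← Ideal.map_span]
    exact pr _ ((Ideal.span_singleton_le_iff_mem _).2 ha) ((Ideal.span_singleton_prime hp.ne_zero).2 hp)
  have dv : ∀ a b, a ∈ mvIdeal → Prime a → algebraMap _ S a ∣ algebraMap _ S b → a ∣ b := by
    intro a b ha hp h
    rw [← Ideal.mem_span_singleton]
    apply cm _ ((Ideal.span_singleton_le_iff_mem _).2 ha) ((Ideal.span_singleton_prime hp.ne_zero).2 hp)
    rw [Ideal.map_span, Set.image_singleton, Ideal.mem_span_singleton]; exact h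
  have P3 : Prime (3 : MvPolynomial (Fin 2) ℤ) := (Ideal.span_singleton_prime (by norm_num)).1 mv_p3
  have Pf : Prime (-5 * MvPolynomial.X 0 ^ 3 + 9 : MvPolynomial (Fin 2) ℤ) := by
    have : Fact (Nat.Prime 5) := ⟨Nat.prime_five⟩
    have := prime_mv 0 _ (prime_cubic_aux 5 5 (by simp))
    rw [map_add, map_mul, map_neg, map_natCast, map_pow, Polynomial.aeval_X, map_ofNat] at this
    exact this
  have Pg : Prime (-2 * MvPolynomial.X 1 ^ 3 + 9 : MvPolynomial (Fin 2) ℤ) := by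
    have : Fact (Nat.Prime 2) := ⟨Nat.prime_two⟩
    have := prime_mv 1 _ (prime_cubic_aux 2 2 (by simp))
    rw [map_add, map_mul, map_neg, map_natCast, map_pow, Polynomial.aeval_X, map_ofNat] at this
    exact this
  have m9 : (9 : MvPolynomial (Fin 2) ℤ) ∈ mvIdeal := by
    rw [show (9 : MvPolynomial (Fin 2) ℤ) = 3 * 3 by norm_num]; exact Ideal.mul_mem_left _ _ m3
  have mf : (-5 * MvPolynomial.X 0 ^ 3 + 9 : MvPolynomial (Fin 2) ℤ) ∈ mvIdeal :=
    Ideal.add_mem _ (Ideal.mul_mem_left _ _ (Ideal.pow_mem_of_mem _ mx _ (by norm_num))) m9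
  have mg : (-2 * MvPolynomial.X 1 ^ 3 + 9 : MvPolynomial (Fin 2) ℤ) ∈ mvIdeal :=
    Ideal.add_mem _ (Ideal.mul_mem_left _ _ (Ideal.pow_mem_of_mem _ my _ (by norm_num))) m9
  have e3 : (3 : S) = algebraMap (MvPolynomial (Fin 2) ℤ) S 3 := (map_ofNat _ 3).symm
  have ef : (-5 * x ^ 3 + 9 : S) = algebraMap (MvPolynomial (Fin 2) ℤ) S (-5 * MvPolynomial.X 0 ^ 3 + 9) := by
    rw [map_add, map_mul, map_neg, map_ofNat, map_ofNat, map_pow]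
  have eg : (-2 * y ^ 3 + 9 : S) = algebraMap (MvPolynomial (Fin 2) ℤ) S (-2 * MvPolynomial.X 1 ^ 3 + 9) := by
    rw [map_add, map_mul, map_neg, map_ofNat, map_ofNat, map_pow]
  have e3x : Ideal.span {3, x} = (Ideal.span {(3 : MvPolynomial (Fin 2) ℤ), MvPolynomial.X 0}).map (algebraMap (MvPolynomial (Fin 2) ℤ) S) := by
    rw [Ideal.map_span, Set.image_pair, e3]
  have le3x : (Ideal.span {(3 : MvPolynomial (Fin 2) ℤ), MvPolynomial.X 0}) ≤ mvIdeal := by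
    rw [Ideal.span_le, Set.pair_subset_iff]; exact ⟨m3, mx⟩
  refine ⟨?_, ?_, ?_, ?_, ?_, ?_, ?_, ?_⟩
  · rw [e3]; exact prel _ m3 P3
  · rw [ef]; exact prel _ mf Pf
  · rw [eg]; exact prel _ mg Pg
  · rw [ef, eg]
    intro h
    obtain ⟨q, hq⟩ := dv _ _ mf Pf h
    have := congrArg (MvPolynomial.aeval (![0, 1] : Fin 2 → ℤ)) hq
    simp at this
    omega
  · rw [ef, eg]
    intro h
    obtain ⟨q, hq⟩ := dv _ _ mg Pg h
    have := congrArg (MvPolynomial.aeval (![1, 0] : Fin 2 → ℤ)) hq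
    simp at this
    omega
  · rw [e3x]; exact pr _ le3x mv_p3x
  · rw [e3]
    intro h
    exact mv_x3 (Ideal.mem_span_singleton.2 (dv _ _ m3 P3 h))
  · rw [e3x]
    intro h
    exact mv_y3x (cm _ le3x mv_p3x _ h)

lemma sfacts2 (hM : mvIdeal.IsPrime)
    {S : Type*} [CommRing S] [IsDomain S] [Algebra (MvPolynomial (Fin 2) ℤ) S]
    [IsLocalization (mvIdeal.primeCompl (hp := hM)) S] :
    IsIntegrallyClosed S ∧ IsNoetherianRing S ∧ ∃ _ : IsLocalRing S, IsLocalRing.maximalIdeal S = Ideal.span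
     {3, (algebraMap (MvPolynomial (Fin 2) ℤ) S (MvPolynomial.X 0)), (algebraMap (MvPolynomial (Fin 2) ℤ) S (MvPolynomial.X 1))} := by
  refine ⟨isIntegrallyClosed_of_isLocalization S (mvIdeal.primeCompl (hp := hM)) (@Ideal.primeCompl_le_nonZeroDivisors _ _ _ mvIdeal hM), 
    IsLocalization.isNoetherianRing (mvIdeal.primeCompl (hp := hM)) S inferInstance, 
    @IsLocalization.AtPrime.isLocalRing _ _ S _ _ mvIdeal hM ‹_›, ?_⟩
  have : IsLocalization.AtPrime S mvIdeal := ‹_›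
  have := IsLocalization.AtPrime.isLocalRing S mvIdeal
  rw [← IsLocalization.AtPrime.map_eq_maximalIdeal mvIdeal S, mvIdeal, Ideal.map_span]
  simp only [Set.image_insert_eq, Set.image_singleton, map_ofNat]

structure KF {S K : Type*} [CommRing S] [Field K] [Algebra S K] (x y : S) (u v : K) : Prop where
  sf : SFacts x y
  inj : Function.Injective (algebraMap S K)
  hu : u ^ 3 = 3 * (3 - 2 * algebraMap S K x ^ 3 - algebraMap S K x * u ^ 2 - algebraMap S K x ^ 2 * u)
  hv : v ^ 3 = 3 * (3 - algebraMap S K y ^ 3 - algebraMap S K y * v ^ 2 - algebraMap S K y ^ 2 * v)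
  ind : ∀ a0 a1 a2 a3 a4 a5 a6 a7 a8 : S,
    algebraMap S K a0 + algebraMap S K a1 * u + algebraMap S K a2 * v + algebraMap S K a3 * u ^ 2 +
    algebraMap S K a4 * (u * v) + algebraMap S K a5 * v ^ 2 + algebraMap S K a6 * (u ^ 2 * v) +
    algebraMap S K a7 * (u * v ^ 2) + algebraMap S K a8 * (u ^ 2 * v ^ 2) = 0 →
    a0 = 0 ∧ a1 = 0 ∧ a2 = 0 ∧ a3 = 0 ∧ a4 = 0 ∧ a5 = 0 ∧ a6 = 0 ∧ a7 = 0 ∧ a8 = 0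
  spn : ∀ z : K, IsIntegral S z → ∃ a0 a1 a2 a3 a4 a5 a6 a7 a8 : S,
    9 * z = algebraMap S K a0 + algebraMap S K a1 * u + algebraMap S K a2 * v + algebraMap S K a3 * u ^ 2 +
    algebraMap S K a4 * (u * v) + algebraMap S K a5 * v ^ 2 + algebraMap S K a6 * (u ^ 2 * v) +
    algebraMap S K a7 * (u * v ^ 2) + algebraMap S K a8 * (u ^ 2 * v ^ 2)

lemma kf_of {S L K : Type*} [CommRing S] [IsDomain S] [IsIntegrallyClosed S] [Field L] [Algebra S L]
    [IsFractionRing S L] [Field K] [Algebra L K] [Algebra S K] [IsScalarTower S L K]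
    {x y : S} (sf : SFacts x y) {ω μ : K}
    (hω : ω ^ 3 = algebraMap S K (-5 * x ^ 3 + 9)) (hμ : μ ^ 3 = algebraMap S K (-2 * y ^ 3 + 9))
    (hK : Algebra.adjoin L ({ω, μ} : Set K) = ⊤) :
    Module.finrank L K = 9 ∧ KF x y (ω - algebraMap S K x) (μ - algebraMap S K y) := by
  have injL := IsFractionRing.injective S L
  have inj : Function.Injective (algebraMap S K) := by
    rw [IsScalarTower.algebraMap_eq S L K]
    exact (algebraMap L K).injective.comp injL
  have h3 : (3 : L) ≠ 0 := by
    intro h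
    apply sf.p3.ne_zero
    apply injL
    rw [map_ofNat, map_zero, h]
  obtain ⟨k1, k2, k3, k4⟩ := kfacts h3 sf.pf sf.pg sf.gf sf.fg hω hμ hK
  have tw : ∀ s, algebraMap L K (algebraMap S L s) = algebraMap S K s := fun s =>
    (IsScalarTower.algebraMap_apply S L K s).symm
  refine ⟨k1, sf, inj, ?_, ?_, ?_, ?_⟩
  · rw [map_add, map_mul, map_neg, map_ofNat, map_ofNat, map_pow] at hω
    linear_combination hω
  · rw [map_add, map_mul, map_neg, map_ofNat, map_ofNat, map_pow] at hμ
    linear_combination hμ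
  · intro a0 a1 a2 a3 a4 a5 a6 a7 a8 h
    have key := k3 (fun i j => algebraMap S L ((![![a0 - x * a1 + x ^ 2 * a3 - y * (a2 - x * a4 + x ^ 2 * a6) + y ^ 2 * (a5 - x * a7 + x ^ 2 * a8),
      (a2 - x * a4 + x ^ 2 * a6) - 2 * y * (a5 - x * a7 + x ^ 2 * a8), a5 - x * a7 + x ^ 2 * a8],
      ![(a1 - 2 * x * a3) - y * (a4 - 2 * x * a6) + y ^ 2 * (a7 - 2 * x * a8), a4 - 2 * x * a6 - 2 * y * (a7 - 2 * x * a8), a7 - 2 * x * a8],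
      ![a3 - y * a6 + y ^ 2 * a8, a6 - 2 * y * a8, a8]] : Fin 3 → Fin 3 → S) i j)) (by
        simp only [tw]
        rw [← h]
        simp [Fin.sum_univ_three]
        rw [map_ofNat]
        ring)
    have key : ∀ i j, (![![a0 - x * a1 + x ^ 2 * a3 - y * (a2 - x * a4 + x ^ 2 * a6) + y ^ 2 * (a5 - x * a7 + x ^ 2 * a8),
      (a2 - x * a4 + x ^ 2 * a6) - 2 * y * (a5 - x * a7 + x ^ 2 * a8), a5 - x * a7 + x ^ 2 * a8],
      ![(a1 - 2 * x * a3) - y * (a4 - 2 * x * a6) + y ^ 2 * (a7 - 2 * x * a8), a4 - 2 * x * a6 - 2 * y * (a7 - 2 * x * a8), a7 - 2 * x * a8],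
      ![a3 - y * a6 + y ^ 2 * a8, a6 - 2 * y * a8, a8]] : Fin 3 → Fin 3 → S) i j = 0 := fun i j => injL (by rw [map_zero]; exact key i j)
    have q8 : a8 = 0 := key 2 2
    have q6 : a6 - 2 * y * a8 = 0 := key 2 1
    have q3 : a3 - y * a6 + y ^ 2 * a8 = 0 := key 2 0
    have q7 : a7 - 2 * x * a8 = 0 := key 1 2
    have q4 : a4 - 2 * x * a6 - 2 * y * (a7 - 2 * x * a8) = 0 := key 1 1
    have q1 : (a1 - 2 * x * a3) - y * (a4 - 2 * x * a6) + y ^ 2 * (a7 - 2 * x * a8) = 0 := key 1 0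
    have q5 : a5 - x * a7 + x ^ 2 * a8 = 0 := key 0 2
    have q2 : (a2 - x * a4 + x ^ 2 * a6) - 2 * y * (a5 - x * a7 + x ^ 2 * a8) = 0 := key 0 1
    have q0 : a0 - x * a1 + x ^ 2 * a3 - y * (a2 - x * a4 + x ^ 2 * a6) + y ^ 2 * (a5 - x * a7 + x ^ 2 * a8) = 0 := key 0 0
    subst q8
    simp only [mul_zero, sub_zero, add_zero] at *
    subst q6 q7
    simp only [mul_zero, sub_zero, add_zero] at *
    subst q3 q4 q5
    simp only [mul_zero, sub_zero, add_zero] at *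
    subst q1 q2
    simp only [mul_zero, sub_zero, add_zero] at *
    exact ⟨q0, trivial, trivial, trivial, trivial, trivial, trivial, trivial, trivial⟩
  · intro z hz
    obtain ⟨c, rfl⟩ := k2 z
    have k5 := k4 c hz
    choose n hn using fun i j => nine_coeff (L := L) sf.pf sf.pg sf.fg hω hμ (c i j) i j (k5 i j)
    have hn' : ∀ i j, 9 * algebraMap L K (c i j) = algebraMap S K (n i j) := fun i j => by
      rw [← tw, hn, map_mul, map_ofNat]
    refine ⟨n 0 0 + x * n 1 0 + x ^ 2 * n 2 0 + y * (n 0 1 + x * n 1 1 + x ^ 2 * n 2 1) + y ^ 2 * (n 0 2 + x * n 1 2 + x ^ 2 * n 2 2),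
      n 1 0 + 2 * x * n 2 0 + y * (n 1 1 + 2 * x * n 2 1) + y ^ 2 * (n 1 2 + 2 * x * n 2 2),
      n 0 1 + x * n 1 1 + x ^ 2 * n 2 1 + 2 * y * (n 0 2 + x * n 1 2 + x ^ 2 * n 2 2),
      n 2 0 + y * n 2 1 + y ^ 2 * n 2 2,
      n 1 1 + 2 * x * n 2 1 + 2 * y * (n 1 2 + 2 * x * n 2 2),
      n 0 2 + x * n 1 2 + x ^ 2 * n 2 2,
      n 2 1 + 2 * y * n 2 2, n 1 2 + 2 * x * n 2 2, n 2 2, ?_⟩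
    simp only [map_add, map_mul, map_pow, ← hn']
    rw [map_ofNat]
    simp [Fin.sum_univ_three]
    ring

structure Hom3 {S B D : Type*} [CommRing S] [CommRing B] [Algebra S B] [CommRing D] (ψ : B →+* D) : Prop where
  three : (3 : D) = 0
  dvd : ∀ s : S, ψ (algebraMap S B s) = 0 → 3 ∣ s

structure BR {S B : Type*} [CommRing S] [CommRing B] [Algebra S B] (x h c : S) (u z t τ a : B) : Prop where
  ha : a = 3 - 2 * algebraMap S B x ^ 3 - algebraMap S B x * u ^ 2 - algebraMap S B x ^ 2 * u
  u3 : u ^ 3 = 3 * a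
  ut : u ^ 2 * z = 3 * t
  zτ : z * τ = 3 * algebraMap S B c
  zz : z ^ 2 = 3 * (τ - algebraMap S B h * z - algebraMap S B h ^ 2)
  tu : t * u = a * z
  tz : t * z = u ^ 2 * (τ - algebraMap S B h * z - algebraMap S B h ^ 2)
  tt : t ^ 2 = u * a * (τ - algebraMap S B h * z - algebraMap S B h ^ 2)

lemma saturate {S B D1 D2 : Type*} [CommRing S] [IsDomain S] [CommRing B] [IsDomain B] [Algebra S B] [CommRing D1] [IsDomain D1]
    [CommRing D2] [IsDomain D2] {x h c : S} {u z t τ a : B} (R : BR x h c u z t τ a)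
    (h3 : (3 : B) ≠ 0) (p3 : Prime (3 : S)) (hx : ¬ 3 ∣ x) (hh : ¬ 3 ∣ h)
    (ψ1 : B →+* D1) (ψ2 : B →+* D2) (H1 : Hom3 (S := S) ψ1) (H2 : Hom3 (S := S) ψ2)
    (e1 : ψ1 τ = ψ1 (algebraMap S B h) ^ 2) (e2 : ψ2 τ = 0)
    (c0 c1 c2 c3 c4 c5 c6 c7 c8 : S) (w : B)
    (hw : algebraMap S B c0 + algebraMap S B c1 * u + algebraMap S B c2 * u ^ 2 + algebraMap S B c3 * t +
      algebraMap S B c4 * z + algebraMap S B c5 * (u * z) + algebraMap S B c6 * τ + algebraMap S B c7 * (u * τ)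
      + algebraMap S B c8 * (u ^ 2 * τ) = 3 * w) :
    3 ∣ c0 ∧ 3 ∣ c1 ∧ 3 ∣ c2 ∧ 3 ∣ c3 ∧ 3 ∣ c4 ∧ 3 ∣ c5 ∧ 3 ∣ c6 ∧ 3 ∣ c7 ∧ 3 ∣ c8 := by
  have T1 : ψ1 3 = 0 := by rw [map_ofNat]; exact H1.three
  have T2 : ψ2 3 = 0 := by rw [map_ofNat]; exact H2.three
  have u1 : ψ1 u = 0 := by
    have := congrArg ψ1 R.u3
    rw [map_mul, T1, zero_mul, map_pow] at this
    exact pow_eq_zero_iff (by norm_num) |>.1 this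
  have u2 : ψ2 u = 0 := by
    have := congrArg ψ2 R.u3
    rw [map_mul, T2, zero_mul, map_pow] at this
    exact pow_eq_zero_iff (by norm_num) |>.1 this
  have z1 : ψ1 z = 0 := by
    have := congrArg ψ1 R.zz
    rw [map_mul, T1, zero_mul, map_pow] at this
    exact pow_eq_zero_iff (by norm_num) |>.1 this
  have z2 : ψ2 z = 0 := by
    have := congrArg ψ2 R.zz
    rw [map_mul, T2, zero_mul, map_pow] at this
    exact pow_eq_zero_iff (by norm_num) |>.1 this
  have t1 : ψ1 t = 0 := by
    have := congrArg ψ1 R.tt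
    rw [map_mul, map_mul, u1, zero_mul, zero_mul, map_pow] at this
    exact pow_eq_zero_iff (by norm_num) |>.1 this
  have t2 : ψ2 t = 0 := by
    have := congrArg ψ2 R.tt
    rw [map_mul, map_mul, u2, zero_mul, zero_mul, map_pow] at this
    exact pow_eq_zero_iff (by norm_num) |>.1 this
  have x1 : ψ1 (algebraMap S B x) ≠ 0 := fun h => hx (H1.dvd _ h)
  have x2 : ψ2 (algebraMap S B x) ≠ 0 := fun h => hx (H2.dvd _ h)
  have h1 : ψ1 (algebraMap S B h) ≠ 0 := fun h => hh (H1.dvd _ h)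
  have h2 : ψ2 (algebraMap S B h) ≠ 0 := fun h => hh (H2.dvd _ h)
  have a1 : ψ1 a = ψ1 (algebraMap S B x) ^ 3 := by
    rw [R.ha]
    simp only [map_sub, map_mul, map_pow, u1, T1]
    rw [map_ofNat]
    linear_combination -(ψ1 (algebraMap S B x) ^ 3) * H1.three
  have a2 : ψ2 a = ψ2 (algebraMap S B x) ^ 3 := by
    rw [R.ha]
    simp only [map_sub, map_mul, map_pow, u2, T2]
    rw [map_ofNat]
    linear_combination -(ψ2 (algebraMap S B x) ^ 3) * H2.three
  have E2 : ψ2 (τ - algebraMap S B h * z - algebraMap S B h ^ 2) = - ψ2 (algebraMap S B h) ^ 2 := by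
    simp only [map_sub, map_mul, map_pow, e2, z2]; ring
  set ζ := τ - algebraMap S B h * z - algebraMap S B h ^ 2
  have cancel : ∀ b b' : B, 3 * b = 3 * b' → b = b' := fun b b' hb => mul_left_cancel₀ h3 hb
  obtain ⟨-, u3, ut, zτ, zz, tu, tz, tt⟩ := R
  -- step i
  have k0 : 3 ∣ c0 := H2.dvd _ (by
    have := congrArg ψ2 hw
    simpa only [map_add, map_mul, map_pow, u2, z2, t2, e2, T2, mul_zero, zero_mul, add_zero, zero_pow two_ne_zero] using this)
  have k6 : 3 ∣ c6 := by
    have := congrArg ψ1 hw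
    obtain ⟨d, rfl⟩ := k0
    simp only [map_add, map_mul, map_pow, u1, z1, t1, e1, T1, mul_zero, zero_mul, add_zero, zero_pow two_ne_zero] at this
    rw [map_ofNat, map_ofNat, H1.three, zero_mul, zero_add] at this
    rcases mul_eq_zero.1 this with h | h
    · exact H1.dvd _ h
    · exact absurd (pow_eq_zero_iff two_ne_zero |>.1 h) h1
  obtain ⟨d0, rfl⟩ := k0
  obtain ⟨d6, rfl⟩ := k6
  have hw : algebraMap S B c1 * u + algebraMap S B c2 * u ^ 2 + algebraMap S B c3 * t +
      algebraMap S B c4 * z + algebraMap S B c5 * (u * z) + algebraMap S B c7 * (u * τ)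
      + algebraMap S B c8 * (u ^ 2 * τ) = 3 * (w - algebraMap S B d0 - algebraMap S B d6 * τ) := by
    simp only [map_mul] at hw
    rw [map_ofNat] at hw
    linear_combination hw
  generalize (w - algebraMap S B d0 - algebraMap S B d6 * τ) = w at hw
  -- step ii
  have k3 : 3 ∣ c3 := by
    have key : w * (u * z) = algebraMap S B c1 * t + algebraMap S B c2 * (a * z) + algebraMap S B c3 * (a * ζ) + algebraMap S B c4 * (u * ζ)
      + algebraMap S B c5 * (u ^ 2 * ζ) + algebraMap S B c7 * (u ^ 2 * algebraMap S B c) + algebraMap S B c8 * (u ^ 3 * algebraMap S B c) := by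
      apply cancel
      linear_combination (-(u * z)) * hw + algebraMap S B c1 * ut + algebraMap S B c2 * z * u3 + algebraMap S B c3 * (z * tu + a * zz)
        + algebraMap S B c4 * u * zz + algebraMap S B c5 * u ^ 2 * zz + algebraMap S B c7 * u ^ 2 * zτ + algebraMap S B c8 * u ^ 3 * zτ
    have := congrArg ψ2 key
    simp only [map_add, map_mul, map_pow, u2, z2, t2, E2, a2, mul_zero, zero_mul, add_zero, zero_add, zero_pow two_ne_zero, zero_pow three_ne_zero] at this
    by_contra hn
    have hn : ψ2 (algebraMap S B c3) ≠ 0 := fun h => hn (H2.dvd _ h)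
    have : ψ2 (algebraMap S B c3) * (ψ2 (algebraMap S B x) ^ 3 * ψ2 (algebraMap S B h) ^ 2) = 0 := by linear_combination this
    exact mul_ne_zero hn (mul_ne_zero (pow_ne_zero _ x2) (pow_ne_zero _ h2)) this
  obtain ⟨d3, rfl⟩ := k3
  have hw : algebraMap S B c1 * u + algebraMap S B c2 * u ^ 2 +
      algebraMap S B c4 * z + algebraMap S B c5 * (u * z) + algebraMap S B c7 * (u * τ)
      + algebraMap S B c8 * (u ^ 2 * τ) = 3 * (w - algebraMap S B d3 * t) := by
    simp only [map_mul] at hw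
    rw [map_ofNat] at hw
    linear_combination hw
  generalize (w - algebraMap S B d3 * t) = w at hw
  -- step iii
  have key : w * u ^ 2 = algebraMap S B c1 * a + algebraMap S B c2 * (u * a) + algebraMap S B c4 * t
      + algebraMap S B c5 * (a * z) + algebraMap S B c7 * (a * τ) + algebraMap S B c8 * (u * (a * τ)) := by
      apply cancel
      linear_combination (-(u ^ 2)) * hw + algebraMap S B c1 * u3 + algebraMap S B c2 * u * u3 
        + algebraMap S B c4 * ut + algebraMap S B c5 * z * u3 + algebraMap S B c7 * τ * u3 + algebraMap S B c8 * u * τ * u3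
  have k1 : 3 ∣ c1 := by
    have := congrArg ψ2 key
    simp only [map_add, map_mul, map_pow, u2, z2, t2, e2, a2, mul_zero, zero_mul, add_zero, zero_add, zero_pow two_ne_zero, zero_pow three_ne_zero] at this
    by_contra hn
    have hn : ψ2 (algebraMap S B c1) ≠ 0 := fun h => hn (H2.dvd _ h)
    exact mul_ne_zero hn (pow_ne_zero _ x2) this.symm
  obtain ⟨d1, rfl⟩ := k1
  have k7 : 3 ∣ c7 := by
    have := congrArg ψ1 key
    simp only [map_add, map_mul, map_pow, u1, z1, t1, e1, T1, a1, mul_zero, zero_mul, add_zero, zero_add, zero_pow two_ne_zero, zero_pow three_ne_zero] at this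
    rw [map_ofNat, map_ofNat, H1.three, zero_mul, zero_mul, zero_add] at this
    by_contra hn
    have hn : ψ1 (algebraMap S B c7) ≠ 0 := fun h => hn (H1.dvd _ h)
    exact mul_ne_zero hn (mul_ne_zero (pow_ne_zero _ x1) (pow_ne_zero _ h1)) this.symm
  obtain ⟨d7, rfl⟩ := k7
  clear key
  have hw : algebraMap S B c2 * u ^ 2 +
      algebraMap S B c4 * z + algebraMap S B c5 * (u * z) 
      + algebraMap S B c8 * (u ^ 2 * τ) = 3 * (w - algebraMap S B d1 * u - algebraMap S B d7 * (u * τ)) := by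
    simp only [map_mul] at hw
    rw [map_ofNat] at hw
    linear_combination hw
  generalize (w - algebraMap S B d1 * u - algebraMap S B d7 * (u * τ)) = w at hw
  -- step iv
  have k4 : 3 ∣ c4 := by
    have key : w * z = algebraMap S B c2 * t + algebraMap S B c4 * ζ
      + algebraMap S B c5 * (u * ζ) + algebraMap S B c8 * (u ^ 2 * algebraMap S B c) := by
      apply cancel
      linear_combination (-z) * hw + algebraMap S B c2 * ut 
        + algebraMap S B c4 * zz + algebraMap S B c5 * u * zz + algebraMap S B c8 * u ^ 2 * zτ
    have := congrArg ψ2 key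
    simp only [map_add, map_mul, map_pow, u2, z2, t2, E2, a2, mul_zero, zero_mul, add_zero, zero_add, zero_pow two_ne_zero, zero_pow three_ne_zero] at this
    by_contra hn
    have hn : ψ2 (algebraMap S B c4) ≠ 0 := fun h => hn (H2.dvd _ h)
    exact mul_ne_zero hn (neg_ne_zero.2 (pow_ne_zero _ h2)) this.symm
  obtain ⟨d4, rfl⟩ := k4
  have hw : algebraMap S B c2 * u ^ 2 + algebraMap S B c5 * (u * z) 
      + algebraMap S B c8 * (u ^ 2 * τ) = 3 * (w - algebraMap S B d4 * z) := by
    simp only [map_mul] at hw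
    rw [map_ofNat] at hw
    linear_combination hw
  generalize (w - algebraMap S B d4 * z) = w at hw
  -- step v
  have key : w * u = algebraMap S B c2 * a + algebraMap S B c5 * t + algebraMap S B c8 * (a * τ) := by
    apply cancel
    linear_combination (-u) * hw + algebraMap S B c2 * u3 + algebraMap S B c5 * ut + algebraMap S B c8 * τ * u3
  have k2 : 3 ∣ c2 := by
    have := congrArg ψ2 key
    simp only [map_add, map_mul, map_pow, u2, z2, t2, e2, a2, mul_zero, zero_mul, add_zero, zero_add, zero_pow two_ne_zero, zero_pow three_ne_zero] at this
    by_contra hn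
    have hn : ψ2 (algebraMap S B c2) ≠ 0 := fun h => hn (H2.dvd _ h)
    exact mul_ne_zero hn (pow_ne_zero _ x2) this.symm
  obtain ⟨d2, rfl⟩ := k2
  have k8 : 3 ∣ c8 := by
    have := congrArg ψ1 key
    simp only [map_add, map_mul, map_pow, u1, z1, t1, e1, T1, a1, mul_zero, zero_mul, add_zero, zero_add, zero_pow two_ne_zero, zero_pow three_ne_zero] at this
    rw [map_ofNat, map_ofNat, H1.three, zero_mul, zero_mul, zero_add] at this
    by_contra hn
    have hn : ψ1 (algebraMap S B c8) ≠ 0 := fun h => hn (H1.dvd _ h)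
    exact mul_ne_zero hn (mul_ne_zero (pow_ne_zero _ x1) (pow_ne_zero _ h1)) this.symm
  obtain ⟨d8, rfl⟩ := k8
  clear key
  have hw : algebraMap S B c5 * (u * z) = 3 * (w - algebraMap S B d2 * u ^ 2 - algebraMap S B d8 * (u ^ 2 * τ)) := by
    simp only [map_mul] at hw
    rw [map_ofNat] at hw
    linear_combination hw
  generalize (w - algebraMap S B d2 * u ^ 2 - algebraMap S B d8 * (u ^ 2 * τ)) = w at hw
  have k5 : 3 ∣ c5 := by
    have key : w * t = algebraMap S B c5 * (a * ζ) := by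
      apply cancel
      linear_combination (-t) * hw + algebraMap S B c5 * (u * tz + ζ * u3)
    have := congrArg ψ2 key
    simp only [map_add, map_mul, map_pow, u2, z2, t2, E2, a2, mul_zero, zero_mul, add_zero, zero_add, zero_pow two_ne_zero, zero_pow three_ne_zero] at this
    by_contra hn
    have hn : ψ2 (algebraMap S B c5) ≠ 0 := fun h => hn (H2.dvd _ h)
    exact mul_ne_zero hn (mul_ne_zero (pow_ne_zero _ x2) (neg_ne_zero.2 (pow_ne_zero _ h2))) this.symm
  exact ⟨dvd_mul_right _ _, dvd_mul_right _ _, dvd_mul_right _ _, dvd_mul_right _ _, dvd_mul_right _ _, k5, dvd_mul_right _ _, dvd_mul_right _ _, dvd_mul_right _ _⟩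

structure RF {S B : Type*} [CommRing S] [CommRing B] [Algebra S B] (x y : S) (u v p q τ : B) : Prop where
  sf : SFacts x y
  inj : Function.Injective (algebraMap S B)
  hu : u ^ 3 = 3 * (3 - 2 * algebraMap S B x ^ 3 - algebraMap S B x * u ^ 2 - algebraMap S B x ^ 2 * u)
  hv : v ^ 3 = 3 * (3 - algebraMap S B y ^ 3 - algebraMap S B y * v ^ 2 - algebraMap S B y ^ 2 * v)
  hp : 3 * p = u ^ 2 * v
  hq : 3 * q = u * v ^ 2
  hτ : 3 * τ = ((u + algebraMap S B x) * (v + algebraMap S B y)) ^ 2 +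
    algebraMap S B x * algebraMap S B y * ((u + algebraMap S B x) * (v + algebraMap S B y)) +
    (algebraMap S B x * algebraMap S B y) ^ 2
  ind : ∀ a0 a1 a2 a3 a4 a5 a6 a7 a8 : S,
    algebraMap S B a0 + algebraMap S B a1 * u + algebraMap S B a2 * v + algebraMap S B a3 * u ^ 2 +
    algebraMap S B a4 * (u * v) + algebraMap S B a5 * v ^ 2 + algebraMap S B a6 * (u ^ 2 * v) +
    algebraMap S B a7 * (u * v ^ 2) + algebraMap S B a8 * (u ^ 2 * v ^ 2) = 0 →
    a0 = 0 ∧ a1 = 0 ∧ a2 = 0 ∧ a3 = 0 ∧ a4 = 0 ∧ a5 = 0 ∧ a6 = 0 ∧ a7 = 0 ∧ a8 = 0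
  spn : ∀ z : B, ∃ a0 a1 a2 a3 a4 a5 a6 a7 a8 : S,
    9 * z = algebraMap S B a0 + algebraMap S B a1 * u + algebraMap S B a2 * v + algebraMap S B a3 * u ^ 2 +
    algebraMap S B a4 * (u * v) + algebraMap S B a5 * v ^ 2 + algebraMap S B a6 * (u ^ 2 * v) +
    algebraMap S B a7 * (u * v ^ 2) + algebraMap S B a8 * (u ^ 2 * v ^ 2)

open Polynomial in
lemma int_tau {S K : Type*} [CommRing S] [Field K] [Algebra S K] (h3 : (3 : K) ≠ 0) (h c : S) (θ : K)
    (hθ : θ ^ 3 = algebraMap S K h ^ 3 + 9 * algebraMap S K c) :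
    IsIntegral S ((θ ^ 2 + algebraMap S K h * θ + algebraMap S K h ^ 2) / 3) := by
  refine ⟨X ^ 3 + (- C (h ^ 2) * X ^ 2 - C (3 * h * c) * X - C (3 * c ^ 2)), ?_, ?_⟩
  · apply monic_X_pow_add
    compute_degree!
  · simp only [eval₂_add, eval₂_sub, eval₂_mul, eval₂_neg, eval₂_pow, eval₂_X, eval₂_C, map_mul, map_pow]
    rw [map_ofNat]
    field_simp
    linear_combination ((θ ^ 3 - algebraMap S K h ^ 3) + 9 * algebraMap S K c + 3 * algebraMap S K h * (θ ^ 2 + algebraMap S K h * θ + algebraMap S K h ^ 2)) * hθ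

lemma rf_of {S K : Type*} [CommRing S] [IsDomain S] [Field K] [Algebra S K] {x y : S} {u v : K}
    (H : KF x y u v) : ∃ u' v' p q τ : integralClosure S K, RF x y u' v' p q τ := by
  obtain ⟨sf, inj, hu, hv, ind, spn⟩ := H
  have h3 : (3 : K) ≠ 0 := fun h => sf.p3.ne_zero (inj (by rw [map_ofNat, map_zero, h]))
  have iu' : IsIntegral S (u + algebraMap S K x) := by
    apply IsIntegral.of_pow (n := 3) (by norm_num)
    rw [show (u + algebraMap S K x) ^ 3 = algebraMap S K (-5 * x ^ 3 + 9) by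
      rw [map_add, map_mul, map_neg, map_ofNat, map_ofNat, map_pow]; linear_combination hu]
    exact isIntegral_algebraMap
  have iu : IsIntegral S u := by simpa using iu'.sub (isIntegral_algebraMap (x := x))
  have iv' : IsIntegral S (v + algebraMap S K y) := by
    apply IsIntegral.of_pow (n := 3) (by norm_num)
    rw [show (v + algebraMap S K y) ^ 3 = algebraMap S K (-2 * y ^ 3 + 9) by
      rw [map_add, map_mul, map_neg, map_ofNat, map_ofNat, map_pow]; linear_combination hv]
    exact isIntegral_algebraMap
  have iv : IsIntegral S v := by simpa using iv'.sub (isIntegral_algebraMap (x := y))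
  have i3 : IsIntegral S (3 : K) := by rw [← map_ofNat (algebraMap S K)]; exact isIntegral_algebraMap
  have ix := isIntegral_algebraMap (R := S) (A := K) (x := x)
  have iy := isIntegral_algebraMap (R := S) (A := K) (x := y)
  have i2 : IsIntegral S (2 : K) := by rw [← map_ofNat (algebraMap S K)]; exact isIntegral_algebraMap
  have ia : IsIntegral S (3 - 2 * algebraMap S K x ^ 3 - algebraMap S K x * u ^ 2 - algebraMap S K x ^ 2 * u) :=
    ((i3.sub (i2.mul (ix.pow 3))).sub (ix.mul (iu.pow 2))).sub ((ix.pow 2).mul iu)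
  have ib : IsIntegral S (3 - algebraMap S K y ^ 3 - algebraMap S K y * v ^ 2 - algebraMap S K y ^ 2 * v) :=
    ((i3.sub ((iy.pow 3))).sub (iy.mul (iv.pow 2))).sub ((iy.pow 2).mul iv)
  have ip : IsIntegral S (u ^ 2 * v / 3) := by
    apply IsIntegral.of_pow (n := 3) (by norm_num)
    rw [show (u ^ 2 * v / 3) ^ 3 = (3 - 2 * algebraMap S K x ^ 3 - algebraMap S K x * u ^ 2 - algebraMap S K x ^ 2 * u) ^ 2 *
      (3 - algebraMap S K y ^ 3 - algebraMap S K y * v ^ 2 - algebraMap S K y ^ 2 * v) by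
      rw [div_pow, div_eq_iff (pow_ne_zero 3 h3)]; linear_combination (u ^ 3 + 3 * (3 - 2 * algebraMap S K x ^ 3 - algebraMap S K x * u ^ 2 - algebraMap S K x ^ 2 * u)) * v ^ 3 * hu + 9 * (3 - 2 * algebraMap S K x ^ 3 - algebraMap S K x * u ^ 2 - algebraMap S K x ^ 2 * u) ^ 2 * hv]
    exact (ia.pow 2).mul ib
  have iq : IsIntegral S (u * v ^ 2 / 3) := by
    apply IsIntegral.of_pow (n := 3) (by norm_num)
    rw [show (u * v ^ 2 / 3) ^ 3 = (3 - 2 * algebraMap S K x ^ 3 - algebraMap S K x * u ^ 2 - algebraMap S K x ^ 2 * u) *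
      (3 - algebraMap S K y ^ 3 - algebraMap S K y * v ^ 2 - algebraMap S K y ^ 2 * v) ^ 2 by
      rw [div_pow, div_eq_iff (pow_ne_zero 3 h3)]; linear_combination (v ^ 3 + 3 * (3 - algebraMap S K y ^ 3 - algebraMap S K y * v ^ 2 - algebraMap S K y ^ 2 * v)) * u ^ 3 * hv + 9 * (3 - algebraMap S K y ^ 3 - algebraMap S K y * v ^ 2 - algebraMap S K y ^ 2 * v) ^ 2 * hu]
    exact (ia).mul (ib.pow 2)
  have iτ := int_tau h3 (x * y) (x ^ 3 * y ^ 3 - 5 * x ^ 3 - 2 * y ^ 3 + 9) ((u + algebraMap S K x) * (v + algebraMap S K y)) (by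
    rw [map_add, map_sub, map_sub, map_mul, map_mul, map_mul, map_mul, map_ofNat, map_ofNat, map_ofNat, map_pow, map_pow]
    have e1 : (u + algebraMap S K x) ^ 3 = -5 * algebraMap S K x ^ 3 + 9 := by linear_combination hu
    have e2 : (v + algebraMap S K y) ^ 3 = -2 * algebraMap S K y ^ 3 + 9 := by linear_combination hv
    rw [mul_pow, e1, e2]; ring)
  have cc : ∀ s, ((algebraMap S (integralClosure S K) s : integralClosure S K) : K) = algebraMap S K s := fun s => rfl
  refine ⟨⟨u, iu⟩, ⟨v, iv⟩, ⟨_, ip⟩, ⟨_, iq⟩, ⟨_, iτ⟩, sf, ?_, ?_, ?_, ?_, ?_, ?_, ?_, ?_⟩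
  · intro a b hab
    exact inj (congrArg Subtype.val hab)
  · exact Subtype.ext hu
  · exact Subtype.ext hv
  · exact Subtype.ext (show 3 * (u ^ 2 * v / 3) = u ^ 2 * v by field_simp)
  · exact Subtype.ext (show 3 * (u * v ^ 2 / 3) = u * v ^ 2 by field_simp)
  · refine Subtype.ext ?_
    have : ∀ a b : K, a = b → 3 * (a / 3) = b := fun a b h => by rw [h]; field_simp
    exact this _ _ (by rw [map_mul]; rfl)
  · intro a0 a1 a2 a3 a4 a5 a6 a7 a8 h
    exact ind _ _ _ _ _ _ _ _ _ (congrArg Subtype.val h)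
  · intro z
    obtain ⟨a0, a1, a2, a3, a4, a5, a6, a7, a8, h⟩ := spn z z.2
    exact ⟨a0, a1, a2, a3, a4, a5, a6, a7, a8, Subtype.ext h⟩

lemma SFacts.h3 {S : Type*} [CommRing S] {x y : S} (H : SFacts x y) : ¬ 3 ∣ x * y := by
  intro h
  rcases H.p3.dvd_or_dvd h with h | h
  · exact H.x3 h
  · exact H.y3x (Ideal.mem_span_pair.2 (by obtain ⟨d, rfl⟩ := h; exact ⟨d, 0, by ring⟩))

lemma SFacts.c0 {S : Type*} [CommRing S] {x y : S} (H : SFacts x y) : x ^ 3 * y ^ 3 - 5 * x ^ 3 - 2 * y ^ 3 + 9 ≠ 0 := by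
  intro h
  have h := (Ideal.mem_span_pair.2 ⟨y ^ 3 - 3, x ^ 2 * (5 - y ^ 3), by linear_combination -h⟩ : y ^ 3 ∈ Ideal.span {3, x})
  exact H.y3x (H.p3x.mem_of_pow_mem _ h)

lemma RF.three {S B : Type*} [CommRing S] [CommRing B] [Algebra S B] {x y : S} {u v p q τ : B} (H : RF x y u v p q τ) :
    (3 : B) ≠ 0 := fun h => H.sf.p3.ne_zero (H.inj (by rw [map_ofNat, map_zero, h]))

lemma RF.theta3 {S B : Type*} [CommRing S] [CommRing B] [Algebra S B] {x y : S} {u v p q τ : B} (H : RF x y u v p q τ) :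
    ((u + algebraMap S B x) * (v + algebraMap S B y)) ^ 3 = (algebraMap S B x * algebraMap S B y) ^ 3 +
      9 * algebraMap S B (x ^ 3 * y ^ 3 - 5 * x ^ 3 - 2 * y ^ 3 + 9) := by
  rw [map_add, map_sub, map_sub, map_mul, map_mul, map_mul, map_ofNat, map_ofNat, map_ofNat, map_pow, map_pow]
  have e1 : (u + algebraMap S B x) ^ 3 = -5 * algebraMap S B x ^ 3 + 9 := by linear_combination H.hu
  have e2 : (v + algebraMap S B y) ^ 3 = -2 * algebraMap S B y ^ 3 + 9 := by linear_combination H.hv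
  rw [mul_pow, e1, e2]; ring

lemma RF.tau3 {S B : Type*} [CommRing S] [CommRing B] [IsDomain B] [Algebra S B] {x y : S} {u v p q τ : B} (H : RF x y u v p q τ) :
    τ ^ 3 - algebraMap S B (x * y) ^ 2 * τ ^ 2 - 3 * algebraMap S B (x * y) * algebraMap S B (x ^ 3 * y ^ 3 - 5 * x ^ 3 - 2 * y ^ 3 + 9) * τ
      - 3 * algebraMap S B (x ^ 3 * y ^ 3 - 5 * x ^ 3 - 2 * y ^ 3 + 9) ^ 2 = 0 := by
  have ht := H.theta3
  have hτ := H.hτ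
  rw [map_mul]
  have h27 : (27 : B) ≠ 0 := by
    rw [show (27 : B) = 3 ^ 3 by norm_num]; exact pow_ne_zero _ H.three
  apply (mul_eq_zero.1 _).resolve_left h27
  generalize algebraMap S B (x ^ 3 * y ^ 3 - 5 * x ^ 3 - 2 * y ^ 3 + 9) = c at *
  generalize (u + algebraMap S B x) * (v + algebraMap S B y) = θ at *
  generalize algebraMap S B x * algebraMap S B y = h at *
  have : 27 * (τ ^ 3 - h ^ 2 * τ ^ 2 - 3 * h * c * τ - 3 * c ^ 2) = (3 * τ) ^ 3 - 3 * h ^ 2 * (3 * τ) ^ 2 - 27 * h * c * (3 * τ) - 81 * c ^ 2 := by ring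
  rw [this, hτ]
  linear_combination ((θ ^ 3 - h ^ 3) + 9 * c + 3 * h * (θ ^ 2 + h * θ + h ^ 2)) * ht

lemma RF.tau_ind {S B : Type*} [CommRing S] [IsDomain S] [CommRing B] [IsDomain B] [Algebra S B] {x y : S} {u v p q τ : B} (H : RF x y u v p q τ)
    (r0 r1 r2 : S) (hr : algebraMap S B r0 + algebraMap S B r1 * τ + algebraMap S B r2 * τ ^ 2 = 0) : r0 = 0 ∧ r1 = 0 ∧ r2 = 0 := by
  have h3 := H.sf.p3.ne_zero
  have h9 : (9 : S) ≠ 0 := by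
    rw [show (9 : S) = 3 ^ 2 by norm_num]; exact pow_ne_zero _ h3
  have c0 := H.sf.c0
  have ht3 := H.theta3
  have hτ := H.hτ
  have ind : ∀ s0 s1 s2 : S, algebraMap S B s0 + algebraMap S B s1 * ((u + algebraMap S B x) * (v + algebraMap S B y)) +
      algebraMap S B s2 * ((u + algebraMap S B x) * (v + algebraMap S B y)) ^ 2 = 0 → s0 = 0 ∧ s1 = 0 ∧ s2 = 0 := by
    intro s0 s1 s2 h
    obtain ⟨q0, q1, q2, q3, q4, q5, q6, q7, q8⟩ := H.ind (s0 + s1 * (x * y) + s2 * (x ^ 2 * y ^ 2)) (s1 * y + s2 * (2 * x * y ^ 2))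
      (s1 * x + s2 * (2 * x ^ 2 * y)) (s2 * y ^ 2) (s1 + s2 * (4 * x * y)) (s2 * x ^ 2) (s2 * (2 * y)) (s2 * (2 * x)) s2 (by
        rw [← h]
        simp only [map_add, map_mul, map_pow]
        rw [map_ofNat, map_ofNat]
        ring)
    subst q8
    simp only [zero_mul, add_zero] at q4
    subst q4
    simp only [zero_mul, add_zero] at q0
    exact ⟨q0, rfl, rfl⟩
  generalize hc : x ^ 3 * y ^ 3 - 5 * x ^ 3 - 2 * y ^ 3 + 9 = c at *
  generalize (u + algebraMap S B x) * (v + algebraMap S B y) = θ at *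
  obtain ⟨k0, k1, k2⟩ := ind (9 * r0 + 3 * (x * y) ^ 2 * r1 + (3 * (x * y) ^ 4 + 18 * (x * y) * c) * r2) (3 * (x * y) * r1 + (3 * (x * y) ^ 3 + 9 * c) * r2)
    (3 * r1 + 3 * (x * y) ^ 2 * r2) (by
      simp only [map_add, map_mul, map_pow]
      rw [map_ofNat, map_ofNat, map_ofNat]
      generalize algebraMap S B x = X at *
      generalize algebraMap S B y = Y at *
      linear_combination 9 * hr - (3 * algebraMap S B r1) * hτ - algebraMap S B r2 * (3 * τ + (θ ^ 2 + X * Y * θ + (X * Y) ^ 2)) * hτ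
        - algebraMap S B r2 * (θ + 2 * (X * Y)) * ht3)
  have k : 9 * c * r2 = 0 := by linear_combination k1 - x * y * k2
  have z2 : r2 = 0 := (mul_eq_zero.1 k).resolve_left (mul_ne_zero h9 c0)
  subst z2
  have z1 : r1 = 0 := (mul_eq_zero.1 (show 3 * r1 = 0 by linear_combination k2)).resolve_left h3
  subst z1
  exact ⟨(mul_eq_zero.1 (show 9 * r0 = 0 by linear_combination k0)).resolve_left h9, rfl, rfl⟩

open Polynomial in
lemma RF.hom {S B : Type*} [CommRing S] [IsDomain S] [CommRing B] [IsDomain B] [Algebra S B] [Algebra.IsIntegral S B] {x y : S} {u v p q τ : B} (H : RF x y u v p q τ)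
    (s : S) (hs : s = 0 ∨ s = (x * y) ^ 2) : ∃ Q : Ideal B, Q.IsPrime ∧ Hom3 (S := S) (Ideal.Quotient.mk Q) ∧
      Ideal.Quotient.mk Q τ = Ideal.Quotient.mk Q (algebraMap S B s) := by
  let _ : Algebra S[X] B := (aeval τ).toRingHom.toAlgebra
  have am : ∀ P : S[X], algebraMap S[X] B P = aeval τ P := fun _ => rfl
  have : IsScalarTower S S[X] B := IsScalarTower.of_algebraMap_eq (fun s => by
    rw [am, ← C_eq_algebraMap, aeval_C])
  have : Algebra.IsIntegral S[X] B := ⟨fun b => (Algebra.IsIntegral.isIntegral (R := S) b).tower_top⟩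
  set P : Ideal S[X] := (Ideal.span {(3 : S)}).comap (evalRingHom s) with hP
  have : (Ideal.span {(3 : S)}).IsPrime := (Ideal.span_singleton_prime H.sf.p3.ne_zero).2 H.sf.p3
  have : P.IsPrime := Ideal.comap_isPrime _ _
  obtain ⟨Q, -, hQ, hQP⟩ := Ideal.exists_ideal_over_prime_of_isIntegral P (⊥ : Ideal B) (by
    intro f hf
    rw [Ideal.mem_comap, Ideal.mem_bot, am] at hf
    rw [hP, Ideal.mem_comap, Ideal.mem_span_singleton, coe_evalRingHom]
    set c := x ^ 3 * y ^ 3 - 5 * x ^ 3 - 2 * y ^ 3 + 9 with hc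
    set g : S[X] := X ^ 3 + (- C ((x * y) ^ 2) * X ^ 2 - C (3 * (x * y) * c) * X - C (3 * c ^ 2)) with hg
    have hm : g.Monic := by
      apply monic_X_pow_add
      compute_degree!
    have hg0 : aeval τ g = 0 := by
      rw [hg]
      simp only [map_add, map_sub, map_mul, map_neg, map_pow, aeval_X, aeval_C]
      rw [map_ofNat]
      have := H.tau3
      rw [← hc, map_mul] at this
      linear_combination this
    have hgd : g.natDegree = 3 := by
      rw [hg]; compute_degree!
    have hr : f %ₘ g = 0 := by
      have h1 : aeval τ (f %ₘ g) = 0 := by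
        rw [← hf]
        nth_rw 2 [← modByMonic_add_div f g]
        rw [map_add, map_mul, hg0, zero_mul, add_zero]
      have hd : (f %ₘ g).natDegree < 3 := by
        rw [← hgd]; exact natDegree_modByMonic_lt _ hm (fun h => by rw [h] at hgd; simp at hgd)
      generalize f %ₘ g = r at *
      rw [aeval_eq_sum_range' hd] at h1
      simp only [Finset.sum_range_succ, Finset.sum_range_zero, Algebra.smul_def] at h1
      obtain ⟨e0, e1, e2⟩ := H.tau_ind (r.coeff 0) (r.coeff 1) (r.coeff 2) (by linear_combination h1)
      ext n
      rw [coeff_zero]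
      by_cases hn : n < 3
      · interval_cases n <;> assumption
      · exact coeff_eq_zero_of_natDegree_lt (by omega)
    rw [← modByMonic_add_div f g, hr, zero_add, eval_mul]
    apply Dvd.dvd.mul_right
    rw [hg]
    simp only [eval_add, eval_sub, eval_mul, eval_neg, eval_pow, eval_X, eval_C]
    rcases hs with rfl | rfl
    · exact ⟨-c ^ 2, by ring⟩
    · exact ⟨-(x * y) ^ 3 * c - c ^ 2, by ring⟩)
  have mem : ∀ f : S[X], aeval τ f ∈ Q ↔ 3 ∣ f.eval s := by
    intro f
    rw [← am, ← Ideal.mem_comap, hQP, hP, Ideal.mem_comap, Ideal.mem_span_singleton, coe_evalRingHom]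
  refine ⟨Q, hQ, ⟨?_, ?_⟩, ?_⟩
  · rw [← map_ofNat (Ideal.Quotient.mk Q), Ideal.Quotient.eq_zero_iff_mem]
    have := (mem (C 3)).2 (by simp)
    rwa [aeval_C, map_ofNat] at this
  · intro s' h
    rw [Ideal.Quotient.eq_zero_iff_mem] at h
    have := (mem (C s')).1 (by rwa [aeval_C])
    rwa [eval_C] at this
  · rw [Ideal.Quotient.eq]
    have := (mem (X - C s)).2 (by simp)
    rwa [map_sub, aeval_X, aeval_C] at this

lemma SFacts.f3 {S : Type*} [CommRing S] {x y : S} (H : SFacts x y) {a : S} (h : 3 ∣ (-5 * x ^ 3 + 9) * a) : 3 ∣ a := by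
  refine (H.p3.dvd_or_dvd h).resolve_left ?_
  rintro ⟨d, hd⟩
  exact H.x3 (H.p3.dvd_of_dvd_pow (n := 3) ⟨d + 2 * x ^ 3 - 3, by linear_combination hd⟩)

lemma SFacts.f9 {S : Type*} [CommRing S] [IsDomain S] {x y : S} (H : SFacts x y) {a d : S} (h : (-5 * x ^ 3 + 9) * a = 9 * d) : ∃ m, a = 9 * m := by
  obtain ⟨a', rfl⟩ := H.f3 (a := a) ⟨3 * d, by linear_combination h⟩
  have h : (-5 * x ^ 3 + 9) * a' = 3 * d := mul_left_cancel₀ H.p3.ne_zero (by linear_combination h)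
  obtain ⟨a'', rfl⟩ := H.f3 (a := a') ⟨d, h⟩
  exact ⟨a'', by ring⟩

lemma SFacts.step {S : Type*} [CommRing S] [IsDomain S] {x y : S} (H : SFacts x y) {e d : S}
    (h : 3 ∣ x * e - y ^ 2 * d) : ∃ d', 3 ∣ d - x * d' ∧ 3 ∣ e - y ^ 2 * d' := by
  obtain ⟨k, hk⟩ := h
  have h1 : y ^ 2 * d ∈ Ideal.span {3, x} := Ideal.mem_span_pair.2 ⟨-k, e, by linear_combination hk⟩
  have h2 : d ∈ Ideal.span {3, x} := by
    rcases H.p3x.mem_or_mem h1 with h | h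
    · exact absurd (H.p3x.mem_of_pow_mem _ h) H.y3x
    · exact h
  obtain ⟨m, d', rfl⟩ := Ideal.mem_span_pair.1 h2
  refine ⟨d', ⟨m, by ring⟩, ?_⟩
  refine (H.p3.dvd_or_dvd (a := x) ⟨k + y ^ 2 * m, by linear_combination hk⟩).resolve_left H.x3

lemma SFacts.div {S : Type*} [CommRing S] [IsDomain S] {x y : S} (H : SFacts x y) {n3 n4 n5 d3 d4 d5 d9 : S}
    (e3 : (-5 * x ^ 3 + 9) * n3 = 3 * d3 + y ^ 2 * d9) (e4 : (-5 * x ^ 3 + 9) * n4 = 3 * d4 + 2 * x * y * d9)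
    (e5 : (-5 * x ^ 3 + 9) * n5 = 3 * d5 + x ^ 2 * d9) :
    ∃ δ m3 m4 m5, n3 = 3 * m3 + y ^ 2 * δ ∧ n4 = 3 * m4 + 2 * x * y * δ ∧ n5 = 3 * m5 + x ^ 2 * δ := by
  obtain ⟨d', ⟨k1, h1⟩, h2⟩ := H.step (e := x ^ 2 * n3) (d := d9) ⟨d3 + (2 * x ^ 3 - 3) * n3, by linear_combination e3⟩
  obtain ⟨d'', ⟨k2, h3⟩, h4⟩ := H.step (e := x * n3) (d := d') (by convert h2 using 1; ring)
  obtain ⟨δ, ⟨k3, h5⟩, ⟨m3, h6⟩⟩ := H.step (e := n3) (d := d'') h4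
  have h9 : d9 = x ^ 3 * δ + 3 * (k1 + x * k2 + x ^ 2 * k3) := by linear_combination h1 + x * h3 + x ^ 2 * h5
  obtain ⟨m4, h7⟩ := H.f3 (a := n4 - 2 * x * y * δ) ⟨d4 + 2 * x * y * (k1 + x * k2 + x ^ 2 * k3) + 2 * x * y * δ * (2 * x ^ 3 - 3), by
    rw [h9] at e4; linear_combination e4⟩
  obtain ⟨m5, h8⟩ := H.f3 (a := n5 - x ^ 2 * δ) ⟨d5 + x ^ 2 * (k1 + x * k2 + x ^ 2 * k3) + x ^ 2 * δ * (2 * x ^ 3 - 3), by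
    rw [h9] at e5; linear_combination e5⟩
  exact ⟨δ, m3, m4, m5, by linear_combination h6, by linear_combination h7, by linear_combination h8⟩

lemma RF.br {S B : Type*} [CommRing S] [IsDomain S] [CommRing B] [IsDomain B] [Algebra S B] {x y : S} {u v p q τ : B} (H : RF x y u v p q τ) :
    BR x (x * y) (x ^ 3 * y ^ 3 - 5 * x ^ 3 - 2 * y ^ 3 + 9) u (u * v + algebraMap S B x * v + algebraMap S B y * u)
      ((3 - 2 * algebraMap S B x ^ 3 - algebraMap S B x * u ^ 2 - algebraMap S B x ^ 2 * u) * (v + algebraMap S B y) + algebraMap S B x * p) τ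
      (3 - 2 * algebraMap S B x ^ 3 - algebraMap S B x * u ^ 2 - algebraMap S B x ^ 2 * u) := by
  have h3 := H.three
  have cancel : ∀ b b' : B, 3 * b = 3 * b' → b = b' := fun b b' hb => mul_left_cancel₀ h3 hb
  have hu := H.hu
  have hp := H.hp
  have hτ := H.hτ
  have ht := H.theta3
  generalize x ^ 3 * y ^ 3 - 5 * x ^ 3 - 2 * y ^ 3 + 9 = c at *
  have ut : u ^ 2 * (u * v + algebraMap S B x * v + algebraMap S B y * u) = 3 * ((3 - 2 * algebraMap S B x ^ 3 - algebraMap S B x * u ^ 2 - algebraMap S B x ^ 2 * u) * (v + algebraMap S B y) + algebraMap S B x * p) := by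
    linear_combination (v + algebraMap S B y) * hu - algebraMap S B x * hp
  generalize ((3 - 2 * algebraMap S B x ^ 3 - algebraMap S B x * u ^ 2 - algebraMap S B x ^ 2 * u) * (v + algebraMap S B y) + algebraMap S B x * p) = t at *
  generalize ha : 3 - 2 * algebraMap S B x ^ 3 - algebraMap S B x * u ^ 2 - algebraMap S B x ^ 2 * u = a at *
  have zz : (u * v + algebraMap S B x * v + algebraMap S B y * u) ^ 2 = 3 * (τ - algebraMap S B (x * y) * (u * v + algebraMap S B x * v + algebraMap S B y * u) - algebraMap S B (x * y) ^ 2) := by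
    rw [map_mul]; linear_combination -hτ
  have zτ : (u * v + algebraMap S B x * v + algebraMap S B y * u) * τ = 3 * algebraMap S B c := by
    apply cancel
    linear_combination (u * v + algebraMap S B x * v + algebraMap S B y * u) * hτ + ht
  generalize (u * v + algebraMap S B x * v + algebraMap S B y * u) = z at *
  generalize hζ : τ - algebraMap S B (x * y) * z - algebraMap S B (x * y) ^ 2 = ζ at *
  have tu : t * u = a * z := by
    apply cancel
    linear_combination -u * ut + z * hu
  have tz : t * z = u ^ 2 * ζ := by
    apply cancel
    linear_combination -z * ut + u ^ 2 * zz
  have tt : t ^ 2 = u * a * ζ := by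
    apply cancel
    linear_combination -t * ut + u ^ 2 * tz + u * ζ * hu
  exact ⟨ha.symm, hu, ut, zτ, hζ.symm ▸ zz, tu, hζ.symm ▸ tz, hζ.symm ▸ tt⟩

lemma RF.fspan {S B : Type*} [CommRing S] [IsDomain S] [CommRing B] [IsDomain B] [Algebra S B] [Algebra.IsIntegral S B]
    {x y : S} {u v p q τ : B} (H : RF x y u v p q τ) (w : B) :
    ∃ c0 c1 c2 c3 c4 c5 c6 c7 c8 : S,
    algebraMap S B c0 + algebraMap S B c1 * u + algebraMap S B c2 * u ^ 2 +
      algebraMap S B c3 * ((3 - 2 * algebraMap S B x ^ 3 - algebraMap S B x * u ^ 2 - algebraMap S B x ^ 2 * u) * (v + algebraMap S B y) + algebraMap S B x * p) +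
      algebraMap S B c4 * (u * v + algebraMap S B x * v + algebraMap S B y * u)
      + algebraMap S B c5 * (u * (u * v + algebraMap S B x * v + algebraMap S B y * u)) + algebraMap S B c6 * τ + algebraMap S B c7 * (u * τ)
      + algebraMap S B c8 * (u ^ 2 * τ) = (-5 * algebraMap S B x ^ 3 + 9) * w := by
  have h3 := H.three
  have cancel : ∀ b b' : B, 3 * b = 3 * b' → b = b' := fun b b' hb => mul_left_cancel₀ h3 hb
  have br := H.br
  obtain ⟨Q1, hQ1, H1, e1⟩ := H.hom _ (Or.inr rfl)
  obtain ⟨Q2, hQ2, H2, e2⟩ := H.hom _ (Or.inl rfl)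
  have sat := saturate br h3 H.sf.p3 H.sf.x3 H.sf.h3 (Ideal.Quotient.mk Q1) (Ideal.Quotient.mk Q2) H1 H2
    (by rw [e1, map_pow, map_pow]) (by rw [e2, map_zero, map_zero])
  obtain ⟨a0, a1, a2, a3, a4, a5, a6, a7, a8, hw⟩ := H.spn w
  have hτ := H.hτ
  have hz : u * v + algebraMap S B x * v + algebraMap S B y * u = (u + algebraMap S B x) * (v + algebraMap S B y) - algebraMap S B x * algebraMap S B y := by ring
  obtain ⟨-, u3, ut, -, -, -, -, -⟩ := br
  set a := 3 - 2 * algebraMap S B x ^ 3 - algebraMap S B x * u ^ 2 - algebraMap S B x ^ 2 * u with ha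
  set t := a * (v + algebraMap S B y) + algebraMap S B x * p with ht
  set z := u * v + algebraMap S B x * v + algebraMap S B y * u with hzz
  set M : Submodule S B := Submodule.span S (Set.range ![1, u, u ^ 2, t, z, u * z, τ, u * τ, u ^ 2 * τ]) with hM
  have mem : ∀ e, e ∈ M → ∃ c0 c1 c2 c3 c4 c5 c6 c7 c8 : S, algebraMap S B c0 + algebraMap S B c1 * u + algebraMap S B c2 * u ^ 2 + algebraMap S B c3 * t +
      algebraMap S B c4 * z + algebraMap S B c5 * (u * z) + algebraMap S B c6 * τ + algebraMap S B c7 * (u * τ)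
      + algebraMap S B c8 * (u ^ 2 * τ) = e := by
    intro e he
    obtain ⟨c, rfl⟩ := (Submodule.mem_span_range_iff_exists_fun S).1 he
    refine ⟨c 0, c 1, c 2, c 3, c 4, c 5, c 6, c 7, c 8, ?_⟩
    simp only [Fin.sum_univ_succ, Algebra.smul_def]
    simp
    ring
  have g : ∀ i, (![1, u, u ^ 2, t, z, u * z, τ, u * τ, u ^ 2 * τ] : Fin 9 → B) i ∈ M := fun i => Submodule.subset_span ⟨i, rfl⟩
  have g0 : 1 ∈ M := g 0
  have g1 : u ∈ M := g 1
  have g2 : u ^ 2 ∈ M := g 2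
  have g3 : t ∈ M := g 3
  have g4 : z ∈ M := g 4
  have g5 : u * z ∈ M := g 5
  have g6 : τ ∈ M := g 6
  have g7 : u * τ ∈ M := g 7
  have g8 : u ^ 2 * τ ∈ M := g 8
  clear_value M
  have sm : ∀ (s : S) (e : B), e ∈ M → algebraMap S B s * e ∈ M := fun s e he => by
    rw [← Algebra.smul_def]; exact M.smul_mem _ he
  have ad : ∀ (e e' : B), e ∈ M → e' ∈ M → e + e' ∈ M := fun e e' he he' => M.add_mem he he'
  have eqm : ∀ e e' : B, e' ∈ M → e = e' → e ∈ M := fun e e' h h' => h' ▸ h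
  have i3 : algebraMap S B 3 = 3 := map_ofNat _ _
  have i2 : algebraMap S B 2 = 2 := map_ofNat _ _
  have i5 : algebraMap S B 5 = 5 := map_ofNat _ _
  have i9 : algebraMap S B 9 = 9 := map_ofNat _ _
  set X := algebraMap S B x with hX
  set Y := algebraMap S B y with hY
  have f3 : (u + X) ^ 3 = -5 * X ^ 3 + 9 := by linear_combination u3
  set F := -5 * X ^ 3 + 9 with hF
  have hFS : algebraMap S B (-5 * x ^ 3 + 9) = F := by
    rw [map_add, map_mul, map_neg, i5, i9, map_pow]
  have th : (u + X) * (v + Y) = z + X * Y := by rw [hz]; ring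
  set W := 3 * t + 2 * X * (u * z) + X ^ 2 * z + X * Y * (u ^ 2 + 2 * X * u + X ^ 2) with hW
  have eW : F * (v + Y) = W := by
    rw [← f3]; linear_combination (u + X) ^ 2 * th + ut
  have mθ : z + X * Y ∈ M := eqm _ _ (ad _ _ g4 (sm (x * y) _ g0)) (by rw [map_mul]; ring)
  have mω2 : u ^ 2 + 2 * X * u + X ^ 2 ∈ M := eqm _ _ (ad _ _ (ad _ _ g2 (sm (2 * x) _ g1)) (sm (x ^ 2) _ g0)) (by rw [map_mul, map_pow, i2]; ring)
  have muθ : u * z + X * Y * u ∈ M := eqm _ _ (ad _ _ g5 (sm (x * y) _ g1)) (by rw [map_mul])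
  have mW : W ∈ M := eqm _ _ (ad _ _ (ad _ _ (ad _ _ (sm 3 _ g3) (sm (2 * x) _ g5)) (sm (x ^ 2) _ g4)) (sm (x * y) _ mω2)) (by
    rw [map_mul, map_mul, map_pow, i2, i3])
  -- F*v
  have mv : F * v ∈ M := eqm _ _ (ad _ _ mW (sm (-((-5 * x ^ 3 + 9) * y)) _ g0)) (by
    rw [map_neg, map_mul, hFS]; linear_combination eW)
  set W1 := F * (z + X * Y) - X * W with hW1
  have mW1 : W1 ∈ M := eqm _ _ (ad _ _ (sm (-5 * x ^ 3 + 9) _ mθ) (sm (-x) _ mW)) (by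
    rw [map_neg, hFS, hW1]; ring)
  have eW1 : F * (u * (v + Y)) = W1 := by
    rw [hW1, ← eW, ← th]; ring
  have muv : F * (u * v) ∈ M := eqm _ _ (ad _ _ mW1 (sm (-((-5 * x ^ 3 + 9) * y)) _ g1)) (by
    rw [map_neg, map_mul, hFS]; linear_combination eW1)
  set W2 := F * (u * z + X * Y * u) - X * W1 with hW2
  have mW2 : W2 ∈ M := eqm _ _ (ad _ _ (sm (-5 * x ^ 3 + 9) _ muθ) (sm (-x) _ mW1)) (by
    rw [map_neg, hFS, hW2]; ring)
  have eW2 : F * (u ^ 2 * (v + Y)) = W2 := by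
    rw [hW2, ← eW1]; linear_combination F * u * th
  have muuv : F * (u ^ 2 * v) ∈ M := eqm _ _ (ad _ _ mW2 (sm (-((-5 * x ^ 3 + 9) * y)) _ g2)) (by
    rw [map_neg, map_mul, hFS]; linear_combination eW2)
  have mθ2 : 3 * τ - X * Y * (z + X * Y) - (X * Y) ^ 2 ∈ M := eqm _ _ (ad _ _ (ad _ _ (sm 3 _ g6) (sm (-(x * y)) _ mθ)) (sm (-(x * y) ^ 2) _ g0)) (by
    simp only [map_neg, map_pow, map_mul]; rw [i3]; ring)
  set V := 3 * (u * τ + X * τ) - X * Y * (u * z + X * z + X * Y * u + X ^ 2 * Y) - (X * Y) ^ 2 * (u + X) with hV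
  have mV : V ∈ M := eqm _ _ (ad _ _ (ad _ _ (ad _ _ (sm 3 _ g7) (sm x _ mθ2)) (sm (-(x * y)) _ muθ)) (sm (-(x * y) ^ 2) _ g1)) (by
    simp only [map_neg, map_pow, map_mul]; rw [i3, hV]; ring)
  have hθ2 : ((u + X) * (v + Y)) ^ 2 = 3 * τ - X * Y * (z + X * Y) - (X * Y) ^ 2 := by
    rw [hτ, ← th]; ring
  have eV : F * (v + Y) ^ 2 = V := by
    rw [← f3, hV]; linear_combination (u + X) * hθ2
  have mvv : F * v ^ 2 ∈ M := eqm _ _ (ad _ _ (ad _ _ mV (sm (-2 * y) _ mW)) (sm ((-5 * x ^ 3 + 9) * y ^ 2) _ g0)) (by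
    rw [map_mul, map_neg, map_mul, map_pow, hFS, i2]; linear_combination eV - 2 * Y * eW)
  set U1 := 3 * (u ^ 2 * τ + X * (u * τ)) - X * Y * (3 * t + X * Y * u ^ 2 + X * (u * z + X * Y * u)) - (X * Y) ^ 2 * (u ^ 2 + X * u) with hU1
  have mU1 : U1 ∈ M := eqm _ _ (ad _ _ (ad _ _ (ad _ _ (ad _ _ (ad _ _ (sm 3 _ g8) (sm (3 * x) _ g7)) (sm (-(3 * x * y)) _ g3)) (sm (-(x ^ 2 * y)) _ muθ))
     (sm (-2 * (x * y) ^ 2) _ g2)) (sm (-(x * y) ^ 2 * x) _ g1)) (by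
    simp only [map_neg, map_pow, map_mul]; rw [i3, i2, hU1]; ring)
  have eU1 : F * (u * (v + Y) ^ 2) = U1 := by
    rw [hU1]; linear_combination u * eV - X * Y * ut
  have muvv : F * (u * v ^ 2) ∈ M := eqm _ _ (ad _ _ (ad _ _ mU1 (sm (-2 * y) _ mW1)) (sm ((-5 * x ^ 3 + 9) * y ^ 2) _ g1)) (by
    rw [map_mul, map_neg, map_mul, map_pow, hFS, i2]; linear_combination eU1 - 2 * Y * eW1)
  set U2 := F * (3 * τ - X * Y * (z + X * Y) - (X * Y) ^ 2) - 2 * X * (3 * (u ^ 2 * τ + 2 * X * (u * τ) + X ^ 2 * τ) - X * Y * W - (X * Y) ^ 2 * (u ^ 2 + 2 * X * u + X ^ 2)) + X ^ 2 * V with hU2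
  have mω2τ : u ^ 2 * τ + 2 * X * (u * τ) + X ^ 2 * τ ∈ M := eqm _ _ (ad _ _ (ad _ _ g8 (sm (2 * x) _ g7)) (sm (x ^ 2) _ g6)) (by
    simp only [map_pow, map_mul]; rw [i2])
  have mU2 : U2 ∈ M := eqm _ _ (ad _ _ (ad _ _ (ad _ _ (ad _ _ (sm (-5 * x ^ 3 + 9) _ mθ2) (sm (-2 * x * 3) _ mω2τ)) (sm (2 * x * (x * y)) _ mW)) (sm (2 * x * (x * y) ^ 2) _ mω2)) (sm (x ^ 2) _ mV)) (by
    rw [hFS]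
    simp only [map_neg, map_pow, map_mul]; rw [i3, i2, hU2]; ring)
  have eU2 : F * (u ^ 2 * (v + Y) ^ 2) = U2 := by
    rw [hU2]
    linear_combination F * hθ2 - 2 * X * (-(u + X) * (v + Y) ^ 2 * f3 + (u + X) ^ 2 * hθ2 - X * Y * eW - X * Y * (v + Y) * f3 + X * Y * (u + X) ^ 2 * th) + X ^ 2 * eV
  have muuvv : F * (u ^ 2 * v ^ 2) ∈ M := eqm _ _ (ad _ _ (ad _ _ mU2 (sm (-2 * y) _ mW2)) (sm ((-5 * x ^ 3 + 9) * y ^ 2) _ g2)) (by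
    rw [map_mul, map_neg, map_mul, map_pow, hFS, i2]; linear_combination eU2 - 2 * Y * eW2)
  have m9 : 9 * (F * w) ∈ M := eqm _ _ (ad _ _ (ad _ _ (ad _ _ (ad _ _ (ad _ _ (ad _ _ (ad _ _ (ad _ _ 
      (sm (a0 * (-5 * x ^ 3 + 9)) _ g0) (sm (a1 * (-5 * x ^ 3 + 9)) _ g1)) (sm a2 _ mv)) (sm (a3 * (-5 * x ^ 3 + 9)) _ g2))
      (sm a4 _ muv)) (sm a5 _ mvv)) (sm a6 _ muuv)) (sm a7 _ muvv)) (sm a8 _ muuvv)) (by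
    rw [map_mul, map_mul, map_mul, hFS]
    linear_combination F * hw)
  obtain ⟨c0, c1, c2, c3, c4, c5, c6, c7, c8, hc⟩ := mem _ m9
  obtain ⟨⟨d0, rfl⟩, ⟨d1, rfl⟩, ⟨d2, rfl⟩, ⟨d3, rfl⟩, ⟨d4, rfl⟩, ⟨d5, rfl⟩, ⟨d6, rfl⟩, ⟨d7, rfl⟩, ⟨d8, rfl⟩⟩ :=
    sat c0 c1 c2 c3 c4 c5 c6 c7 c8 (3 * (F * w)) (by linear_combination hc)
  simp only [map_mul, i3] at hc
  obtain ⟨⟨k0, rfl⟩, ⟨k1, rfl⟩, ⟨k2, rfl⟩, ⟨k3, rfl⟩, ⟨k4, rfl⟩, ⟨k5, rfl⟩, ⟨k6, rfl⟩, ⟨k7, rfl⟩, ⟨k8, rfl⟩⟩ :=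
    sat d0 d1 d2 d3 d4 d5 d6 d7 d8 (F * w) (by apply cancel; linear_combination hc)
  simp only [map_mul, i3] at hc
  refine ⟨k0, k1, k2, k3, k4, k5, k6, k7, k8, ?_⟩
  apply cancel
  apply cancel
  linear_combination hc

structure GF {S B : Type*} [CommRing S] [CommRing B] [Algebra S B] (x y : S) (u v p q r σ : B) : Prop where
  sf : SFacts x y
  inj : Function.Injective (algebraMap S B)
  three : (3 : B) ≠ 0
  hu : u ^ 3 = 3 * (3 - 2 * algebraMap S B x ^ 3 - algebraMap S B x * u ^ 2 - algebraMap S B x ^ 2 * u)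
  hv : v ^ 3 = 3 * (3 - algebraMap S B y ^ 3 - algebraMap S B y * v ^ 2 - algebraMap S B y ^ 2 * v)
  hp : 3 * p = u ^ 2 * v
  hq : 3 * q = u * v ^ 2
  hr : 3 * r = u ^ 2 * v ^ 2
  hσ : 3 * σ = (algebraMap S B y * u + algebraMap S B x * v) ^ 2
  rel : ∀ c0 c1 c2 c3 c4 c5 c6 c7 c8 c9 : S,
    algebraMap S B c0 + algebraMap S B c1 * u + algebraMap S B c2 * v + algebraMap S B c3 * u ^ 2 +
    algebraMap S B c4 * (u * v) + algebraMap S B c5 * v ^ 2 + algebraMap S B c6 * p +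
    algebraMap S B c7 * q + algebraMap S B c8 * r + algebraMap S B c9 * σ = 0 →
    c0 = 0 ∧ c1 = 0 ∧ c2 = 0 ∧ c6 = 0 ∧ c7 = 0 ∧ c8 = 0 ∧ ∃ d, c3 = -(y ^ 2 * d) ∧ c4 = -(2 * x * y * d) ∧ c5 = - (x ^ 2 * d) ∧ c9 = 3 * d
  gen : ∀ w : B, ∃ c0 c1 c2 c3 c4 c5 c6 c7 c8 c9 : S,
    algebraMap S B c0 + algebraMap S B c1 * u + algebraMap S B c2 * v + algebraMap S B c3 * u ^ 2 +
    algebraMap S B c4 * (u * v) + algebraMap S B c5 * v ^ 2 + algebraMap S B c6 * p +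
    algebraMap S B c7 * q + algebraMap S B c8 * r + algebraMap S B c9 * σ = w

lemma SFacts.y3 {S : Type*} [CommRing S] {x y : S} (H : SFacts x y) : ¬ 3 ∣ y := by
  rintro ⟨d, hd⟩
  exact H.y3x (Ideal.mem_span_pair.2 ⟨d, 0, by linear_combination -hd⟩)

lemma RF.gf {S B : Type*} [CommRing S] [IsDomain S] [CommRing B] [IsDomain B] [Algebra S B] [Algebra.IsIntegral S B]
    {x y : S} {u v p q τ : B} (H : RF x y u v p q τ) : ∃ r σ : B, GF x y u v p q r σ := by
  have h3 := H.three
  have cancel : ∀ b b' : B, 3 * b = 3 * b' → b = b' := fun b b' hb => mul_left_cancel₀ h3 hb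
  have i3 : algebraMap S B 3 = 3 := map_ofNat _ _
  have i2 : algebraMap S B 2 = 2 := map_ofNat _ _
  have i6 : algebraMap S B 6 = 6 := map_ofNat _ _
  have i5 : algebraMap S B 5 = 5 := map_ofNat _ _
  have i9 : algebraMap S B 9 = 9 := map_ofNat _ _
  have fs := H.fspan
  obtain ⟨sf, inj, hu, hv, hp, hq, hτ, ind, spn⟩ := H
  set X := algebraMap S B x with hX
  set Y := algebraMap S B y with hY
  have hr : 3 * (p * v) = u ^ 2 * v ^ 2 := by linear_combination v * hp
  have hσ : 3 * (τ - p * v - 2 * X * q - 2 * Y * p - X * Y * (u * v + X * v + Y * u) - (X * Y) ^ 2) = (Y * u + X * v) ^ 2 := by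
    linear_combination hτ - hr - 2 * X * hq - 2 * Y * hp
  refine ⟨p * v, _, sf, inj, h3, hu, hv, hp, hq, hr, hσ, ?_, ?_⟩
  · intro c0 c1 c2 c3 c4 c5 c6 c7 c8 c9 hc
    generalize τ - p * v - 2 * X * q - 2 * Y * p - X * Y * (u * v + X * v + Y * u) - (X * Y) ^ 2 = σ at *
    obtain ⟨h0, h1, h2, h3', h4, h5, h6, h7, h8⟩ := ind (3 * c0) (3 * c1) (3 * c2) (3 * c3 + y ^ 2 * c9) (3 * c4 + 2 * x * y * c9) (3 * c5 + x ^ 2 * c9) c6 c7 c8 (by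
      simp only [map_add, map_mul, map_pow]
      rw [i3, i2]
      linear_combination 3 * hc - algebraMap S B c9 * hσ - algebraMap S B c6 * hp - algebraMap S B c7 * hq - algebraMap S B c8 * hr)
    have c3' : ∀ {b : S}, 3 * b = 0 → b = 0 := fun {b} hb => (mul_eq_zero.1 hb).resolve_left sf.p3.ne_zero
    have : 3 ∣ c9 := by
      rcases sf.p3.dvd_or_dvd (a := y ^ 2) (b := c9) ⟨-c3, by linear_combination h3'⟩ with h | h
      · exact absurd (sf.p3.dvd_of_dvd_pow h) sf.y3
      · exact h
    obtain ⟨d, rfl⟩ := this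
    refine ⟨c3' h0, c3' h1, c3' h2, h6, h7, h8, d, ?_, ?_, ?_, rfl⟩
    · exact eq_neg_of_add_eq_zero_left (c3' (by linear_combination h3'))
    · exact eq_neg_of_add_eq_zero_left (c3' (by linear_combination h4))
    · exact eq_neg_of_add_eq_zero_left (c3' (by linear_combination h5))
  · intro w
    generalize hσ' : τ - p * v - 2 * X * q - 2 * Y * p - X * Y * (u * v + X * v + Y * u) - (X * Y) ^ 2 = σ at *
    generalize p * v = r at *
    have eτ : τ = σ + r + 2 * X * q + 2 * Y * p + X * Y * (u * v + X * v + Y * u) + (X * Y) ^ 2 := by linear_combination hσ'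
    set M : Submodule S B := Submodule.span S (Set.range ![1, u, v, u ^ 2, u * v, v ^ 2, p, q, r, σ]) with hM
    have mem : ∀ e, e ∈ M → ∃ c0 c1 c2 c3 c4 c5 c6 c7 c8 c9 : S, 
      algebraMap S B c0 + algebraMap S B c1 * u + algebraMap S B c2 * v + algebraMap S B c3 * u ^ 2 +
    algebraMap S B c4 * (u * v) + algebraMap S B c5 * v ^ 2 + algebraMap S B c6 * p +
    algebraMap S B c7 * q + algebraMap S B c8 * r + algebraMap S B c9 * σ = e := by
      intro e he
      obtain ⟨c, rfl⟩ := (Submodule.mem_span_range_iff_exists_fun S).1 he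
      refine ⟨c 0, c 1, c 2, c 3, c 4, c 5, c 6, c 7, c 8, c 9, ?_⟩
      simp only [Fin.sum_univ_succ, Algebra.smul_def]
      simp
      ring
    have g : ∀ i, (![1, u, v, u ^ 2, u * v, v ^ 2, p, q, r, σ] : Fin 10 → B) i ∈ M := fun i => Submodule.subset_span ⟨i, rfl⟩
    have g0 : 1 ∈ M := g 0
    have g1 : u ∈ M := g 1
    have g2 : v ∈ M := g 2
    have g3 : u ^ 2 ∈ M := g 3
    have g4 : u * v ∈ M := g 4
    have g5 : v ^ 2 ∈ M := g 5
    have g6 : p ∈ M := g 6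
    have g7 : q ∈ M := g 7
    have g8 : r ∈ M := g 8
    have g9 : σ ∈ M := g 9
    clear_value M
    have sm : ∀ (s : S) (e : B), e ∈ M → algebraMap S B s * e ∈ M := fun s e he => by
      rw [← Algebra.smul_def]; exact M.smul_mem _ he
    have ad : ∀ {e e' : B}, e ∈ M → e' ∈ M → e + e' ∈ M := fun he he' => M.add_mem he he'
    have sb : ∀ {e e' : B}, e ∈ M → e' ∈ M → e - e' ∈ M := fun he he' => M.sub_mem he he'
    have eqm : ∀ {e e' : B}, e' ∈ M → e = e' → e ∈ M := fun h h' => h' ▸ h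
    have sX : ∀ {e : B}, e ∈ M → X * e ∈ M := fun he => sm x _ he
    have sY : ∀ {e : B}, e ∈ M → Y * e ∈ M := fun he => sm y _ he
    have s3 : ∀ {e : B}, e ∈ M → 3 * e ∈ M := fun he => i3 ▸ sm 3 _ he
    have s2 : ∀ {e : B}, e ∈ M → 2 * e ∈ M := fun he => i2 ▸ sm 2 _ he
    set a := 3 - 2 * X ^ 3 - X * u ^ 2 - X ^ 2 * u with ha
    have sl : ∀ {e : B}, e ∈ M → (3 - 2 * X ^ 3) * e ∈ M := fun he => eqm (sb (s3 he) (s2 (sX (sX (sX he))))) (by ring)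
    have ma : a ∈ M := eqm (sb (sb (sl g0) (sX g3)) (sX (sX g1))) (by rw [ha]; ring)
    have av : a * v = (3 - 2 * X ^ 3) * v - X * (3 * p) - X * (X * (u * v)) := by rw [ha]; linear_combination X * hp
    have mav : a * v ∈ M := eqm (sb (sb (sl g2) (sX (s3 g6))) (sX (sX g4))) av
    have avv : a * v ^ 2 = (3 - 2 * X ^ 3) * v ^ 2 - X * (3 * r) - X * (X * (3 * q)) := by rw [ha]; linear_combination X * hr + X ^ 2 * hq
    have mavv : a * v ^ 2 ∈ M := eqm (sb (sb (sl g5) (sX (s3 g8))) (sX (sX (s3 g7)))) avv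
    have ua : u * a = (3 - 2 * X ^ 3) * u - X * (3 * a) - X * (X * u ^ 2) := by rw [ha]; linear_combination -X * hu
    have mua : u * a ∈ M := eqm (sb (sb (sl g1) (sX (s3 ma))) (sX (sX g3))) ua
    have up : u * p = a * v := cancel _ _ (by linear_combination u * hp + v * hu)
    have uq : u * q = r := cancel _ _ (by linear_combination u * hq - hr)
    have ur : u * r = a * v ^ 2 := cancel _ _ (by linear_combination u * hr + v ^ 2 * hu)
    have us : u * σ = Y * (Y * a) + 2 * (X * (Y * p)) + X * (X * q) := cancel _ _ (by linear_combination u * hσ + Y ^ 2 * hu - 2 * X * Y * hp - X ^ 2 * hq)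
    have uz : u * (u * v + X * v + Y * u) = 3 * p + X * (u * v) + Y * u ^ 2 := by linear_combination -hp
    have mz : u * v + X * v + Y * u ∈ M := ad (ad g4 (sX g2)) (sY g1)
    have muz : u * (u * v + X * v + Y * u) ∈ M := eqm (ad (ad (s3 g6) (sX g4)) (sY g3)) uz
    have mt : a * (v + Y) + X * p ∈ M := eqm (ad (ad mav (sY ma)) (sX g6)) (by ring)
    have mus : u * σ ∈ M := eqm (ad (ad (sY (sY ma)) (s2 (sX (sY g6)))) (sX (sX g7))) us
    have mτ : τ ∈ M := eqm (ad (ad (ad (ad (ad g9 g8) (s2 (sX g7))) (s2 (sY g6))) (sX (sY mz))) (sX (sX (sY (sY g0))))) (by rw [eτ]; ring)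
    have muτ : u * τ ∈ M := eqm (ad (ad (ad (ad (ad mus mavv) (s2 (sX g8))) (s2 (sY mav))) (sX (sY muz))) (sX (sX (sY (sY g1))))) (by
      rw [eτ]; linear_combination ur + 2 * X * uq + 2 * Y * up)
    have mup : u * p ∈ M := up ▸ mav
    have muq : u * q ∈ M := uq ▸ g8
    have mauv : a * v * u ∈ M := eqm (sb (sb (sl g4) (sX (s3 mav))) (sX (sX (s3 g6)))) (by linear_combination u * av - 3 * X * up + X ^ 2 * hp)
    have maur : a * v ^ 2 * u ∈ M := eqm (sb (sb (sl (s3 g7)) (sX (s3 mavv))) (sX (sX (s3 g8)))) (by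
      linear_combination u * avv - 3 * X * ur - 3 * X ^ 2 * uq - (3 - 2 * X ^ 3) * hq)
    have muus : u * (u * σ) ∈ M := eqm (ad (ad (sY (sY mua)) (s2 (sX (sY mav)))) (sX (sX g8))) (by
      rw [us]; linear_combination 2 * X * Y * up + X ^ 2 * uq)
    have muuz : u * (u * (u * v + X * v + Y * u)) ∈ M := eqm (ad (ad (s3 mav) (sX (s3 g6))) (sY (s3 ma))) (by
      rw [uz]; linear_combination 3 * up - X * hp + Y * hu)
    have muuτ : u ^ 2 * τ ∈ M := eqm (ad (ad (ad (ad (ad muus maur) (s2 (sX mavv))) (s2 (sY mauv))) (sX (sY muuz))) (sX (sX (sY (sY g3))))) (by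
      rw [eτ]; linear_combination u * ur + 2 * X * u * uq + 2 * X * ur + 2 * Y * u * up)
    obtain ⟨a0, a1, a2, a3, a4, a5, a6, a7, a8, hw⟩ := spn w
    obtain ⟨b0, b1, b2, b3, b4, b5, b6, b7, b8, hb⟩ := fs w
    have mf : (-5 * X ^ 3 + 9) * w ∈ M := by
      rw [← hb]
      exact ad (ad (ad (ad (ad (ad (ad (ad (eqm (sm b0 _ g0) (by ring)) (sm b1 _ g1)) (sm b2 _ g3)) (sm b3 _ mt)) (sm b4 _ mz)) (sm b5 _ muz)) (sm b6 _ mτ)) (sm b7 _ muτ)) (sm b8 _ muuτ)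
    obtain ⟨d0, d1, d2, d3, d4, d5, d6, d7, d8, d9, hd⟩ := mem _ mf
    obtain ⟨k0, k1, k2, k3, k4, k5, k6, k7, k8⟩ := ind (9 * d0 - (-5 * x ^ 3 + 9) * a0) (9 * d1 - (-5 * x ^ 3 + 9) * a1) (9 * d2 - (-5 * x ^ 3 + 9) * a2)
      (9 * d3 + 3 * y ^ 2 * d9 - (-5 * x ^ 3 + 9) * a3) (9 * d4 + 6 * x * y * d9 - (-5 * x ^ 3 + 9) * a4) (9 * d5 + 3 * x ^ 2 * d9 - (-5 * x ^ 3 + 9) * a5)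
      (3 * d6 - (-5 * x ^ 3 + 9) * a6) (3 * d7 - (-5 * x ^ 3 + 9) * a7) (3 * d8 - (-5 * x ^ 3 + 9) * a8) (by
      simp only [map_sub, map_add, map_mul, map_neg, map_pow]
      rw [i9, i3, i5, i6]
      linear_combination 9 * hd + (-5 * X ^ 3 + 9) * hw - 3 * algebraMap S B d9 * hσ - 3 * algebraMap S B d6 * hp - 3 * algebraMap S B d7 * hq - 3 * algebraMap S B d8 * hr)
    obtain ⟨m0, rfl⟩ := sf.f9 (a := a0) (d := d0) (by linear_combination -k0)
    obtain ⟨m1, rfl⟩ := sf.f9 (a := a1) (d := d1) (by linear_combination -k1)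
    obtain ⟨m2, rfl⟩ := sf.f9 (a := a2) (d := d2) (by linear_combination -k2)
    obtain ⟨m6, rfl⟩ := sf.f3 (a := a6) ⟨d6, by linear_combination -k6⟩
    obtain ⟨m7, rfl⟩ := sf.f3 (a := a7) ⟨d7, by linear_combination -k7⟩
    obtain ⟨m8, rfl⟩ := sf.f3 (a := a8) ⟨d8, by linear_combination -k8⟩
    obtain ⟨n3, rfl⟩ := sf.f3 (a := a3) ⟨3 * d3 + y ^ 2 * d9, by linear_combination -k3⟩
    obtain ⟨n4, rfl⟩ := sf.f3 (a := a4) ⟨3 * d4 + 2 * x * y * d9, by linear_combination -k4⟩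
    obtain ⟨n5, rfl⟩ := sf.f3 (a := a5) ⟨3 * d5 + x ^ 2 * d9, by linear_combination -k5⟩
    obtain ⟨δ, m3, m4, m5, rfl, rfl, rfl⟩ := sf.div (n3 := n3) (n4 := n4) (n5 := n5) (d3 := d3) (d4 := d4) (d5 := d5) (d9 := d9)
      (mul_left_cancel₀ sf.p3.ne_zero (by linear_combination -k3))
      (mul_left_cancel₀ sf.p3.ne_zero (by linear_combination -k4))
      (mul_left_cancel₀ sf.p3.ne_zero (by linear_combination -k5))
    refine ⟨m0, m1, m2, m3, m4, m5, m6, m7, m8, δ, cancel _ _ (cancel _ _ ?_)⟩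
    simp only [map_add, map_mul, map_pow] at hw
    rw [i9, i3, i2] at hw
    linear_combination -hw + 3 * algebraMap S B δ * hσ + 3 * algebraMap S B m6 * hp + 3 * algebraMap S B m7 * hq + 3 * algebraMap S B m8 * hr


lemma ht3 {B : Type*} [CommRing B] {P0 P1 P2 P3 : Ideal B} [P0.IsPrime] [P1.IsPrime] [P2.IsPrime] [P3.IsPrime]
    (h1 : P0 < P1) (h2 : P1 < P2) (h3 : P2 < P3) : 3 ≤ P3.height := by
  have a1 := Ideal.height_add_one_le_of_lt_of_isPrime h1
  have a2 := Ideal.height_add_one_le_of_lt_of_isPrime h2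
  have a3 := Ideal.height_add_one_le_of_lt_of_isPrime h3
  calc (3 : ℕ∞) = 0 + 1 + 1 + 1 := by norm_num
    _ ≤ P0.height + 1 + 1 + 1 := by gcongr; exact zero_le
    _ ≤ P1.height + 1 + 1 := by gcongr
    _ ≤ P2.height + 1 := by gcongr
    _ ≤ _ := a3

lemma sqfree_of_prime {S : Type*} [CommRing S] [IsDomain S] {c : S} (hc : Prime c) : PaperSquarefree c := by
  intro P hP h1 hcP
  haveI := hP
  have key : P = Ideal.span {c} := by
    by_contra hne
    have hlt : Ideal.span {c} < P := lt_of_le_of_ne ((Ideal.span_singleton_le_iff_mem _).2 hcP) (Ne.symm hne)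
    haveI : (Ideal.span {c}).IsPrime := (Ideal.span_singleton_prime hc.ne_zero).2 hc
    have hb : (⊥ : Ideal S) < Ideal.span {c} := by
      rw [bot_lt_iff_ne_bot, Ne, Ideal.span_singleton_eq_bot]; exact hc.ne_zero
    have a1 := Ideal.height_add_one_le_of_lt_of_isPrime hb
    have a2 := Ideal.height_add_one_le_of_lt_of_isPrime hlt
    have e := PrimeSpectrum.height_eq_orderHeight (⟨P, hP⟩ : PrimeSpectrum S)
    rw [h1] at e
    simp only at e
    rw [e] at a2
    have : (2 : ℕ∞) ≤ 1 := calc (2 : ℕ∞) = 0 + 1 + 1 := by norm_num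
      _ ≤ (⊥ : Ideal S).height + 1 + 1 := by gcongr; exact zero_le
      _ ≤ (Ideal.span {c}).height + 1 := by gcongr
      _ ≤ 1 := a2
    exact absurd this (by decide)
  rw [← Set.image_singleton, ← Ideal.map_span, ← key]

lemma reg_pair {S : Type*} [CommRing S] [IsDomain S] {f g : S} (hf : Prime f) (hfg : ¬ f ∣ g)
    (htop : Ideal.span {f, g} ≠ ⊤) : RingTheory.Sequence.IsRegular S [f, g] := by
  constructor
  · rw [RingTheory.Sequence.isWeaklyRegular_iff_Fin]
    intro i
    fin_cases i
    · rw [isSMulRegular_quotient_iff_mem_of_smul_mem]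
      intro b hb
      simp at hb ⊢
      exact hb.resolve_left hf.ne_zero
    · rw [isSMulRegular_quotient_iff_mem_of_smul_mem]
      intro b hb
      simp [Ideal.ofList_cons, Ideal.mem_span_singleton] at hb ⊢
      exact (hf.dvd_or_dvd hb).resolve_left hfg
  · intro h
    apply htop
    rw [Ideal.ofList_cons, Ideal.ofList_singleton, smul_eq_mul, Ideal.mul_top] at h
    rw [Ideal.span_insert, ← h]

lemma depth_loc {B : Type*} [CommRing B] [IsDomain B] [IsNoetherianRing B] (Q : Ideal B) [Q.IsPrime] {y1 y2 e : B}
    (m1 : y1 ∈ Q) (m2 : y2 ∈ Q) (h0 : y1 ≠ 0) (k2 : ∀ b, y1 ∣ y2 * b → y1 ∣ b)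
    (he : ∀ s, s ∉ Q → s * e ∉ Ideal.span {y1, y2}) (hQ : ∀ q ∈ Q, q * e ∈ Ideal.span {y1, y2}) :
    modDepth (Localization.AtPrime Q) (Localization.AtPrime Q) ≤ 2 := by
  set A := Localization.AtPrime Q
  have hle : Q.primeCompl ≤ nonZeroDivisors B := Ideal.primeCompl_le_nonZeroDivisors Q
  haveI : IsDomain A := IsLocalization.isDomain_of_le_nonZeroDivisors A hle
  haveI : IsNoetherianRing A := IsLocalization.isNoetherianRing Q.primeCompl A inferInstance
  have inj : Function.Injective (algebraMap B A) := IsLocalization.injective A hle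
  have hmax : IsLocalRing.maximalIdeal A = Q.map (algebraMap B A) :=
    (IsLocalization.AtPrime.map_eq_maximalIdeal Q A).symm
  have hspan : Ideal.span {algebraMap B A y1} ⊔ Ideal.span {algebraMap B A y2} = (Ideal.span {y1, y2}).map (algebraMap B A) := by
    rw [Ideal.map_span, Set.image_pair, Ideal.span_insert]
  apply sSup_le
  refine depth_lt (y1 := algebraMap B A y1) (y2 := algebraMap B A y2) ?_ ?_ ?_ ?_ ?_
  · rw [hmax]; exact Ideal.mem_map_of_mem _ m1
  · rw [hmax]; exact Ideal.mem_map_of_mem _ m2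
  · rw [Ne, ← map_zero (algebraMap B A)]; exact fun h => h0 (inj h)
  · intro b hb
    rw [Ideal.mem_span_singleton] at hb ⊢
    obtain ⟨c, hc⟩ := hb
    obtain ⟨⟨α, s⟩, h1⟩ := IsLocalization.surj Q.primeCompl b
    obtain ⟨⟨γ, t⟩, h2⟩ := IsLocalization.surj Q.primeCompl c
    simp only at h1 h2
    obtain ⟨δ, hδ⟩ := k2 (α * t) ⟨γ * s, inj (by
      simp only [map_mul]; rw [← h1, ← h2]
      linear_combination (algebraMap B A s * algebraMap B A t) * hc)⟩
    have us : IsUnit (algebraMap B A (s * t)) := IsLocalization.map_units A (s * t)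
    obtain ⟨ι, hι⟩ := us.exists_right_inv
    have hδ' := congrArg (algebraMap B A) hδ
    simp only [map_mul] at hδ' hι
    exact ⟨algebraMap B A δ * ι, by
      linear_combination (-b) * hι + (algebraMap B A t * ι) * h1 + ι * hδ'⟩
  · rw [hspan]
    refine ⟨algebraMap B A e, ?_, ?_⟩
    · intro h
      obtain ⟨⟨⟨i, hi⟩, s⟩, h⟩ := (IsLocalization.mem_map_algebraMap_iff Q.primeCompl A).1 h
      apply he s s.2
      rw [← map_mul] at h
      have h := inj h
      rw [mul_comm, h]; exact hi
    · intro q hq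
      rw [hmax] at hq
      refine Submodule.span_induction (p := fun q _ => q * algebraMap B A e ∈ (Ideal.span {y1, y2}).map (algebraMap B A)) ?_ ?_ ?_ ?_ hq
      · rintro _ ⟨q, hq, rfl⟩
        rw [← map_mul]; exact Ideal.mem_map_of_mem _ (hQ q hq)
      · simp
      · intro a b _ _ ha hb
        rw [add_mul]; exact Ideal.add_mem _ ha hb
      · intro a b _ hb
        rw [smul_eq_mul, mul_assoc]; exact Ideal.mul_mem_left _ _ hb


noncomputable def genMap {S B : Type*} [CommRing S] [CommRing B] [Algebra S B] (u v p q r σ : B) : (Fin 10 → S) →ₗ[S] B :=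
  Fintype.linearCombination S ![1, u, v, u ^ 2, u * v, v ^ 2, p, q, r, σ]

lemma genMap_apply {S B : Type*} [CommRing S] [CommRing B] [Algebra S B] (u v p q r σ : B) (c : Fin 10 → S) :
    genMap u v p q r σ c = algebraMap S B (c 0) + algebraMap S B (c 1) * u + algebraMap S B (c 2) * v + algebraMap S B (c 3) * u ^ 2 +
    algebraMap S B (c 4) * (u * v) + algebraMap S B (c 5) * v ^ 2 + algebraMap S B (c 6) * p +
    algebraMap S B (c 7) * q + algebraMap S B (c 8) * r + algebraMap S B (c 9) * σ := by
  rw [genMap, Fintype.linearCombination_apply]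
  simp only [Fin.sum_univ_succ, Algebra.smul_def]
  simp
  ring

def relVec {S : Type*} [CommRing S] (x y : S) : Fin 10 → S := ![0, 0, 0, -y ^ 2, -2 * x * y, -x ^ 2, 0, 0, 0, 3]

lemma GF.surj {S B : Type*} [CommRing S] [CommRing B] [Algebra S B] {x y : S} {u v p q r σ : B}
    (H : GF x y u v p q r σ) : Function.Surjective (genMap (S := S) u v p q r σ) := by
  intro w
  obtain ⟨c0, c1, c2, c3, c4, c5, c6, c7, c8, c9, h⟩ := H.gen w
  refine ⟨![c0, c1, c2, c3, c4, c5, c6, c7, c8, c9], ?_⟩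
  rw [genMap_apply, ← h]
  rfl

lemma GF.ker {S B : Type*} [CommRing S] [CommRing B] [Algebra S B] {x y : S} {u v p q r σ : B}
    (H : GF x y u v p q r σ) (c : Fin 10 → S) (hc : genMap (S := S) u v p q r σ c = 0) : ∃ d : S, c = d • relVec x y := by
  rw [genMap_apply] at hc
  obtain ⟨h0, h1, h2, h6, h7, h8, d, h3, h4, h5, h9⟩ := H.rel _ _ _ _ _ _ _ _ _ _ hc
  refine ⟨d, ?_⟩
  funext i
  fin_cases i
  · simpa [relVec] using h0
  · simpa [relVec] using h1
  · simpa [relVec] using h2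
  · simp [relVec]; linear_combination h3
  · simp [relVec]; linear_combination h4
  · simp [relVec]; linear_combination h5
  · simpa [relVec] using h6
  · simpa [relVec] using h7
  · simpa [relVec] using h8
  · simp [relVec]; linear_combination h9

lemma GF.relVec_ker {S B : Type*} [CommRing S] [CommRing B] [Algebra S B] {x y : S} {u v p q r σ : B}
    (H : GF x y u v p q r σ) : genMap (S := S) u v p q r σ (relVec x y) = 0 := by
  rw [genMap_apply]
  have i3 : algebraMap S B 3 = 3 := map_ofNat _ _
  have i2 : algebraMap S B 2 = 2 := map_ofNat _ _
  have := H.hσ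
  change algebraMap S B 0 + algebraMap S B 0 * u + algebraMap S B 0 * v + algebraMap S B (-y ^ 2) * u ^ 2 + algebraMap S B (-2 * x * y) * (u * v)
    + algebraMap S B (-x ^ 2) * v ^ 2 + algebraMap S B 0 * p + algebraMap S B 0 * q + algebraMap S B 0 * r + algebraMap S B 3 * σ = 0
  simp only [map_zero, map_neg, map_mul, map_pow]
  rw [i2, i3]
  linear_combination this

lemma GF.freeRes {S B : Type*} [CommRing S] [IsDomain S] [CommRing B] [Algebra S B] {x y : S} {u v p q r σ : B}
    (H : GF x y u v p q r σ) : HasFreeResLengthLE1 S B := by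
  refine ⟨1, 10, (LinearMap.proj 0).smulRight (relVec x y), genMap u v p q r σ, ?_, H.surj, ?_⟩
  · intro c c' h
    have := congrFun h 9
    simp [relVec] at this
    funext i
    rw [Subsingleton.elim i 0]
    exact this.resolve_right H.sf.p3.ne_zero
  · ext c
    constructor
    · rintro ⟨d, rfl⟩
      simp [H.relVec_ker]
    · intro hc
      obtain ⟨d, rfl⟩ := H.ker c hc
      exact ⟨fun _ => d, by simp⟩

lemma GF.not_proj {S B : Type*} [CommRing S] [IsDomain S] [CommRing B] [Algebra S B] {x y : S} {u v p q r σ : B}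
    (H : GF x y u v p q r σ) (hm : Ideal.span {3, x, y} ≠ ⊤) : ¬ Module.Projective S B := by
  intro hP
  obtain ⟨s, hs⟩ := Module.projective_lifting_property (genMap (S := S) u v p q r σ) LinearMap.id H.surj
  have hs' : ∀ b, genMap (S := S) u v p q r σ (s b) = b := fun b => LinearMap.congr_fun hs b
  have key : ∀ c, ∃ d : S, c - s (genMap u v p q r σ c) = d • relVec x y := fun c => H.ker _ (by rw [map_sub, hs', sub_self])
  choose d hd using fun i : Fin 10 => key (Pi.single i 1)
  have e : relVec x y = ∑ i, relVec x y i • (Pi.single i (1 : S) : Fin 10 → S) := by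
    funext j; simp [Finset.sum_apply, Pi.single_apply]
  have e2 : relVec x y - s (genMap u v p q r σ (relVec x y)) = ∑ i, relVec x y i • (d i • relVec x y) := by
    simp only [← hd, smul_sub]
    rw [Finset.sum_sub_distrib, ← e]
    congr 1
    conv_lhs => rw [e]
    simp only [map_sum, map_smul]
  rw [H.relVec_ker, map_zero, sub_zero] at e2
  have e3 := congrFun e2 9
  simp only [Finset.sum_apply, Pi.smul_apply, smul_eq_mul] at e3
  simp [Fin.sum_univ_succ, relVec] at e3
  apply hm
  rw [Ideal.eq_top_iff_one]
  have : (1 : S) = (d 9) * 3 + (-(x * d 5) - 2 * y * d 4) * x + (-(y * d 3)) * y := 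
    mul_left_cancel₀ H.sf.p3.ne_zero (by linear_combination e3)
  rw [this]
  refine Ideal.add_mem _ (Ideal.add_mem _ ?_ ?_) ?_ <;> exact Ideal.mul_mem_left _ _ (Ideal.subset_span (by simp))


lemma GF.k2 {S B : Type*} [CommRing S] [IsDomain S] [CommRing B] [Algebra S B] {x y : S} {u v p q r σ : B}
    (H : GF x y u v p q r σ) (b : B) (hb : 3 ∣ algebraMap S B x * b) : 3 ∣ b := by
  have i3 : algebraMap S B 3 = 3 := map_ofNat _ _
  have i2 : algebraMap S B 2 = 2 := map_ofNat _ _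
  obtain ⟨c, hc⟩ := hb
  obtain ⟨a0, a1, a2, a3, a4, a5, a6, a7, a8, a9, ha⟩ := H.gen b
  obtain ⟨b0, b1, b2, b3, b4, b5, b6, b7, b8, b9, hb⟩ := H.gen c
  obtain ⟨h0, h1, h2, h6, h7, h8, d, h3, h4, h5, h9⟩ := H.rel (x * a0 - 3 * b0) (x * a1 - 3 * b1) (x * a2 - 3 * b2) (x * a3 - 3 * b3)
    (x * a4 - 3 * b4) (x * a5 - 3 * b5) (x * a6 - 3 * b6) (x * a7 - 3 * b7) (x * a8 - 3 * b8) (x * a9 - 3 * b9) (by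
    simp only [map_sub, map_mul]; rw [i3]; linear_combination hc + algebraMap S B x * ha - 3 * hb)
  have sf := H.sf
  have dx : ∀ a e : S, x * a = 3 * e → 3 ∣ a := fun a e h => (sf.p3.dvd_or_dvd (a := x) ⟨e, h⟩).resolve_left sf.x3
  have hd : d ∈ Ideal.span {3, x} := by
    have : y ^ 2 * d ∈ Ideal.span {3, x} := Ideal.mem_span_pair.2 ⟨b3, -a3, by linear_combination -h3⟩
    exact (sf.p3x.mem_or_mem this).resolve_left fun h => sf.y3x (sf.p3x.mem_of_pow_mem _ h)
  obtain ⟨m, d', hd⟩ := Ideal.mem_span_pair.1 hd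
  obtain ⟨k0, rfl⟩ := dx a0 b0 (by linear_combination h0)
  obtain ⟨k1, rfl⟩ := dx a1 b1 (by linear_combination h1)
  obtain ⟨k2, rfl⟩ := dx a2 b2 (by linear_combination h2)
  obtain ⟨k6, rfl⟩ := dx a6 b6 (by linear_combination h6)
  obtain ⟨k7, rfl⟩ := dx a7 b7 (by linear_combination h7)
  obtain ⟨k8, rfl⟩ := dx a8 b8 (by linear_combination h8)
  obtain ⟨k9, rfl⟩ := dx a9 (b9 + d) (by linear_combination h9)
  obtain ⟨k3, e3⟩ := dx (a3 + y ^ 2 * d') (b3 - y ^ 2 * m) (by linear_combination h3 + y ^ 2 * hd)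
  obtain ⟨k4, e4⟩ := dx (a4 + 2 * x * y * d') (b4 - 2 * x * y * m) (by linear_combination h4 + 2 * x * y * hd)
  obtain ⟨k5, e5⟩ := dx (a5 + x ^ 2 * d') (b5 - x ^ 2 * m) (by linear_combination h5 + x ^ 2 * hd)
  obtain rfl : a3 = 3 * k3 - y ^ 2 * d' := by linear_combination e3
  obtain rfl : a4 = 3 * k4 - 2 * x * y * d' := by linear_combination e4
  obtain rfl : a5 = 3 * k5 - x ^ 2 * d' := by linear_combination e5
  simp only [map_sub, map_mul, map_pow] at ha
  rw [i3, i2] at ha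
  refine ⟨algebraMap S B k0 + algebraMap S B k1 * u + algebraMap S B k2 * v + algebraMap S B k3 * u ^ 2 +
    algebraMap S B k4 * (u * v) + algebraMap S B k5 * v ^ 2 + algebraMap S B k6 * p +
    algebraMap S B k7 * q + algebraMap S B k8 * r + algebraMap S B k9 * σ - algebraMap S B d' * σ, ?_⟩
  linear_combination -ha + algebraMap S B d' * H.hσ

lemma GF.soc {S B : Type*} [CommRing S] [IsDomain S] [CommRing B] [Algebra S B] {x y : S} {u v p q r σ : B}
    (H : GF x y u v p q r σ) (s : S) (h : algebraMap S B s * (algebraMap S B y * u ^ 2) ∈ Ideal.span {3, algebraMap S B x}) :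
    s ∈ Ideal.span {3, x, y} := by
  have i3 : algebraMap S B 3 = 3 := map_ofNat _ _
  obtain ⟨α, β, h⟩ := Ideal.mem_span_pair.1 h
  obtain ⟨a0, a1, a2, a3, a4, a5, a6, a7, a8, a9, ha⟩ := H.gen α
  obtain ⟨b0, b1, b2, b3, b4, b5, b6, b7, b8, b9, hb⟩ := H.gen β
  obtain ⟨-, -, -, -, -, -, d, h3, -, -, -⟩ := H.rel (a0 * 3 + b0 * x) (a1 * 3 + b1 * x) (a2 * 3 + b2 * x) (a3 * 3 + b3 * x - s * y) 
    (a4 * 3 + b4 * x) (a5 * 3 + b5 * x) (a6 * 3 + b6 * x) (a7 * 3 + b7 * x) (a8 * 3 + b8 * x) (a9 * 3 + b9 * x) (by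
    simp only [map_sub, map_add, map_mul]; rw [i3]; linear_combination h + 3 * ha + algebraMap S B x * hb)
  have sf := H.sf
  have : s - y * d ∈ Ideal.span {3, x} := by
    have : y * (s - y * d) ∈ Ideal.span {3, x} := Ideal.mem_span_pair.2 ⟨a3, b3, by linear_combination h3⟩
    exact (sf.p3x.mem_or_mem this).resolve_left sf.y3x
  obtain ⟨m, n, hmn⟩ := Ideal.mem_span_pair.1 this
  have : s = m * 3 + n * x + d * y := by linear_combination -hmn
  rw [this]
  refine Ideal.add_mem _ (Ideal.add_mem _ ?_ ?_) ?_ <;> exact Ideal.mul_mem_left _ _ (Ideal.subset_span (by simp))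

lemma GF.notCM {S B : Type*} [CommRing S] [IsDomain S] [IsNoetherianRing S] [CommRing B] [IsDomain B] [Algebra S B] [Algebra.IsIntegral S B]
    {x y : S} {u v p q r σ : B}
    (H : GF x y u v p q r σ) (hmp : (Ideal.span {3, x, y}).IsPrime) : ¬ IsCMRing B := by
  intro hCM
  have h3 := H.three
  have cancel : ∀ b b' : B, 3 * b = 3 * b' → b = b' := fun b b' hb => mul_left_cancel₀ h3 hb
  have i3 : algebraMap S B 3 = 3 := map_ofNat _ _
  have i2 : algebraMap S B 2 = 2 := map_ofNat _ _
  haveI : Module.Finite S B := Module.Finite.of_surjective _ H.surj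
  haveI : IsNoetherianRing B := IsNoetherianRing.of_finite S B
  have sf := H.sf
  -- chain
  haveI q1 : (Ideal.span {(3 : S)}).IsPrime := (Ideal.span_singleton_prime sf.p3.ne_zero).2 sf.p3
  haveI q2 := sf.p3x
  obtain ⟨P1, -, hP1, c1⟩ := Ideal.exists_ideal_over_prime_of_isIntegral (S := B) (Ideal.span {(3 : S)}) ⊥ (by
    rw [← RingHom.ker_eq_comap_bot, (RingHom.injective_iff_ker_eq_bot _).1 H.inj]; exact bot_le)
  obtain ⟨P2, l2, hP2, c2⟩ := Ideal.exists_ideal_over_prime_of_isIntegral (Ideal.span {3, x}) P1 (by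
    rw [c1]; exact Ideal.span_mono (by simp))
  obtain ⟨Q, l3, hQ, c3⟩ := Ideal.exists_ideal_over_prime_of_isIntegral (Ideal.span {3, x, y}) P2 (by
    rw [c2]; exact Ideal.span_mono (by intro a; simp; tauto))
  have mQ : ∀ s, s ∈ Ideal.span {3, x, y} → algebraMap S B s ∈ Q := fun s hs => by rw [← c3] at hs; exact hs
  have n0 : (⊥ : Ideal B) < P1 := by
    rw [bot_lt_iff_ne_bot]
    rintro rfl
    have : (3 : S) ∈ Ideal.comap (algebraMap S B) ⊥ := by rw [c1]; exact Ideal.subset_span rfl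
    rw [Ideal.mem_comap, i3] at this
    exact h3 this
  have n1 : P1 < P2 := lt_of_le_of_ne l2 (by
    rintro rfl
    have : x ∈ Ideal.span {3, x} := Ideal.subset_span (by simp)
    rw [← c2, c1, Ideal.mem_span_singleton] at this
    exact sf.x3 this)
  have n2 : P2 < Q := lt_of_le_of_ne l3 (by
    rintro rfl
    have : y ∈ Ideal.span {3, x, y} := Ideal.subset_span (by simp)
    rw [← c3, c2] at this
    exact sf.y3x this)
  have hh := ht3 n0 n1 n2
  have hcm := hCM Q hQ
  rw [IsLocalization.AtPrime.ringKrullDim_eq_height Q] at hcm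
  have hcm' : modDepth (Localization.AtPrime Q) (Localization.AtPrime Q) = Q.height := by exact_mod_cast hcm
  rw [← hcm'] at hh
  have m3 : (3 : B) ∈ Q := by rw [← i3]; exact mQ 3 (Ideal.subset_span (by simp))
  have mX := mQ x (Ideal.subset_span (by simp))
  have mY := mQ y (Ideal.subset_span (by simp))
  have soc := H.soc
  have k2 := H.k2
  have gen := H.gen
  have hu := H.hu
  have hv := H.hv
  have hp := H.hp
  have hq := H.hq
  have hr := H.hr
  have hσ := H.hσ
  have mem : ∀ c0 : S, c0 ∈ Ideal.span {3, x, y} → ∃ a b c : B, algebraMap S B c0 = a * 3 + b * algebraMap S B x + c * algebraMap S B y := by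
    intro c0 hc0
    obtain ⟨a, z, hz, rfl⟩ := Ideal.mem_span_insert.1 hc0
    obtain ⟨b, c, rfl⟩ := Ideal.mem_span_pair.1 hz
    exact ⟨algebraMap S B a, algebraMap S B b, algebraMap S B c, by simp only [map_add, map_mul]; rw [i3]; ring⟩
  set X := algebraMap S B x with hX
  set Y := algebraMap S B y with hY
  set a := 3 - 2 * X ^ 3 - X * u ^ 2 - X ^ 2 * u with ha
  set b := 3 - Y ^ 3 - Y * v ^ 2 - Y ^ 2 * v with hb
  have pm : ∀ {e : B} {n : ℕ}, e ^ n ∈ Q → e ∈ Q := fun h => hQ.mem_of_pow_mem _ h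
  have ml : ∀ {e : B} (c : B), e ∈ Q → c * e ∈ Q := fun c h => Q.mul_mem_left c h
  have eqQ : ∀ {e e' : B}, e' ∈ Q → e = e' → e ∈ Q := fun h h' => h' ▸ h
  have mu : u ∈ Q := pm (n := 3) (eqQ (ml a m3) (by rw [hu]; ring))
  have mv : v ∈ Q := pm (n := 3) (eqQ (ml b m3) (by rw [hv]; ring))
  have ma : a ∈ Q := eqQ (Q.add_mem m3 (ml (-2 * X ^ 2 - u ^ 2 - X * u) mX)) (by rw [ha]; ring)
  have mb : b ∈ Q := eqQ (Q.add_mem m3 (ml (-Y ^ 2 - v ^ 2 - Y * v) mY)) (by rw [hb]; ring)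
  have pp : p ^ 2 = q * a := cancel _ _ (cancel _ _ (by linear_combination (3 * p + u ^ 2 * v) * hp + u * v ^ 2 * hu - 3 * a * hq))
  have qq : q ^ 2 = p * b := cancel _ _ (cancel _ _ (by linear_combination (3 * q + u * v ^ 2) * hq + u ^ 2 * v * hv - 3 * b * hp))
  have mp : p ∈ Q := pm (n := 2) (eqQ (ml q ma) pp)
  have mq : q ∈ Q := pm (n := 2) (eqQ (ml p mb) qq)
  have rr : r = p * v := cancel _ _ (by linear_combination hr - v * hp)
  have mr : r ∈ Q := eqQ (ml p mv) rr
  have ss : σ ^ 2 = (Y * u + X * v) * (X ^ 3 + Y ^ 3 - X ^ 3 * Y ^ 3 + X * Y * (Y * p + X * q) - X * Y * σ) + X ^ 2 * Y ^ 2 * (2 * Y * p + 2 * X * q - σ) := by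
    set ρ := Y * u + X * v with hρ
    have h1 : ρ ^ 3 = 3 * (Y ^ 3 * a + 3 * Y ^ 2 * X * p + 3 * Y * X ^ 2 * q + X ^ 3 * b) := by
      rw [hρ]; linear_combination Y ^ 3 * hu + X ^ 3 * hv - 3 * Y ^ 2 * X * hp - 3 * Y * X ^ 2 * hq
    have h2 : 3 * σ ^ 2 = ρ * (Y ^ 3 * a + 3 * Y ^ 2 * X * p + 3 * Y * X ^ 2 * q + X ^ 3 * b) := cancel _ _ (by
      linear_combination (3 * σ + ρ ^ 2) * hσ + ρ * h1)
    have h3' : Y ^ 3 * a + X ^ 3 * b = 3 * (X ^ 3 + Y ^ 3 - X ^ 3 * Y ^ 3) - X * Y * (3 * σ - 2 * X * Y * (u * v)) - X ^ 2 * Y ^ 2 * ρ := by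
      rw [hσ, ha, hb, hρ]; ring
    have h4 : ρ * (u * v) = 3 * (Y * p + X * q) := by rw [hρ]; linear_combination -Y * hp - X * hq
    apply cancel
    linear_combination h2 + ρ * h3' + 2 * X ^ 2 * Y ^ 2 * h4 + X ^ 2 * Y ^ 2 * hσ
  have ms : σ ∈ Q := pm (n := 2) (eqQ (ml ((Y * u + X * v) * (X ^ 2 + X ^ 2 * (- Y ^ 3) + Y * (Y * p + X * q) - Y * σ) + X * Y ^ 2 * (2 * Y * p + 2 * X * q - σ)) mX |> fun h => Q.add_mem h (ml ((Y * u + X * v) * Y ^ 2) mY)) (by rw [ss]; ring))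
  have up : u * p = a * v := cancel _ _ (by linear_combination u * hp + v * hu)
  have uq : u * q = r := cancel _ _ (by linear_combination u * hq - hr)
  have us : u * σ = Y ^ 2 * a + 2 * X * Y * p + X ^ 2 * q := cancel _ _ (by linear_combination u * hσ + Y ^ 2 * hu - 2 * X * Y * hp - X ^ 2 * hq)
  set I : Ideal B := Ideal.span {3, X} with hI
  have I3 : ∀ c : B, 3 * c ∈ I := fun c => I.mul_mem_right _ (Ideal.subset_span (by simp))
  have IX : ∀ c : B, X * c ∈ I := fun c => I.mul_mem_right _ (Ideal.subset_span (by simp))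
  have Ia : ∀ c : B, a * c ∈ I := fun c => I.mul_mem_right _ (by
    have : a = 3 * 1 + X * (-2 * X ^ 2 - u ^ 2 - X * u) := by rw [ha]; ring
    rw [this]; exact I.add_mem (I3 _) (IX _))
  have eqI : ∀ {e e' : B}, e' ∈ I → e = e' → e ∈ I := fun h h' => h' ▸ h
  set e := Y * u ^ 2 with he
  have Yi : ∀ c, c * Y * e ∈ I := fun c => eqI (I.add_mem (I3 (c * σ)) (IX (-c * (2 * Y * u * v + X * v ^ 2)))) (by rw [he]; linear_combination -c * hσ)
  have ui : ∀ c, c * u * e ∈ I := fun c => eqI (I3 (c * Y * a)) (by rw [he]; linear_combination c * Y * hu)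
  have vi : ∀ c, c * v * e ∈ I := fun c => eqI (I3 (c * Y * p)) (by rw [he]; linear_combination -c * Y * hp)
  have pi : ∀ c, c * p * e ∈ I := fun c => eqI (Ia (c * Y * u * v)) (by rw [he]; linear_combination c * Y * u * up)
  have ri : ∀ c, c * r * e ∈ I := fun c => eqI (vi (c * p)) (by rw [rr]; ring)
  have qi : ∀ c, c * q * e ∈ I := fun c => eqI (Ia (c * Y * v ^ 2)) (by
    have : u * r = a * v ^ 2 := cancel _ _ (by linear_combination u * hr + v ^ 2 * hu)
    rw [he]; linear_combination c * Y * u * uq + c * Y * this)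
  have si : ∀ c, c * σ * e ∈ I := fun c => eqI (I.add_mem (Ia (c * Y * u * Y ^ 2)) (IX (c * Y * u * (2 * Y * p + X * q)))) (by
    rw [he]; linear_combination c * Y * u * us)
  have rest : ∀ w : B, ∃ c0 : S, (algebraMap S B c0 * e - w * e ∈ I) ∧ (algebraMap S B c0 - w ∈ Q) := by
    intro w
    obtain ⟨c0, c1, c2, c3, c4, c5, c6, c7, c8, c9, hw⟩ := gen w
    refine ⟨c0, ?_, ?_⟩
    · rw [← neg_mem_iff]
      refine eqI (I.add_mem (I.add_mem (I.add_mem (I.add_mem (I.add_mem (ui (algebraMap S B c1 + algebraMap S B c3 * u + algebraMap S B c4 * v)) (vi (algebraMap S B c2 + algebraMap S B c5 * v)))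
        (pi (algebraMap S B c6))) (qi (algebraMap S B c7))) (ri (algebraMap S B c8))) (si (algebraMap S B c9))) ?_
      rw [← hw]; ring
    · rw [← neg_mem_iff]
      refine eqQ (Q.add_mem (Q.add_mem (Q.add_mem (Q.add_mem (Q.add_mem (ml (algebraMap S B c1 + algebraMap S B c3 * u + algebraMap S B c4 * v) mu) (ml (algebraMap S B c2 + algebraMap S B c5 * v) mv))
        (ml (algebraMap S B c6) mp)) (ml (algebraMap S B c7) mq)) (ml (algebraMap S B c8) mr)) (ml (algebraMap S B c9) ms)) ?_
      rw [← hw]; ring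
  have fin := depth_loc Q (y1 := 3) (y2 := X) (e := e) m3 mX h3 k2 (by
    intro s hs hse
    obtain ⟨c0, h1, h2⟩ := rest s
    have h3 := soc c0 (eqI (I.add_mem h1 hse) (by ring))
    exact hs (eqQ (Q.sub_mem (mQ c0 h3) h2) (by ring))) (by
    intro w hw
    obtain ⟨c0, h1, h2⟩ := rest w
    have h3 : c0 ∈ Ideal.span {3, x, y} := by
      rw [← c3]; exact (eqQ (Q.add_mem h2 hw) (by ring) : algebraMap S B c0 ∈ Q)
    obtain ⟨i, j, k, hijk⟩ := mem c0 h3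
    have h4 : algebraMap S B c0 * e ∈ I := eqI (I.add_mem (I.add_mem (I3 (i * e)) (IX (j * e))) (Yi k)) (by rw [hijk]; ring)
    exact eqI (I.sub_mem h4 h1) (by ring))
  have := hh.trans fin
  exact absurd this (by decide)

theorem stmt19 (hM : mvIdeal.IsPrime)
    {S : Type*} [CommRing S] [IsDomain S] [Algebra (MvPolynomial (Fin 2) ℤ) S]
    [IsLocalization (mvIdeal.primeCompl (hp := hM)) S]
    {L : Type*} [Field L] [Algebra S L] [IsFractionRing S L]
    {K : Type*} [Field K] [Algebra L K] [Algebra S K] [IsScalarTower S L K]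
    {ω μ : K}
    (hω : ω ^ 3 = algebraMap S K (algebraMap (MvPolynomial (Fin 2) ℤ) S (-5 * MvPolynomial.X 0 ^ 3 + 9)))
    (hμ : μ ^ 3 = algebraMap S K (algebraMap (MvPolynomial (Fin 2) ℤ) S (-2 * MvPolynomial.X 1 ^ 3 + 9)))
    (hKgen : Algebra.adjoin L ({ω, μ} : Set K) = ⊤) :
    PaperSquarefree (algebraMap (MvPolynomial (Fin 2) ℤ) S (-5 * MvPolynomial.X 0 ^ 3 + 9)) ∧
    PaperSquarefree (algebraMap (MvPolynomial (Fin 2) ℤ) S (-2 * MvPolynomial.X 1 ^ 3 + 9)) ∧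
    RingTheory.Sequence.IsRegular S [algebraMap (MvPolynomial (Fin 2) ℤ) S (-5 * MvPolynomial.X 0 ^ 3 + 9), algebraMap (MvPolynomial (Fin 2) ℤ) S (-2 * MvPolynomial.X 1 ^ 3 + 9)] ∧
    Module.finrank L K = 9 ∧
    ¬IsCMRing (integralClosure S K) ∧
    HasFreeResLengthLE1 S (integralClosure S K) ∧
    ¬Module.Projective S (integralClosure S K) := by
  have sf := sfacts (S := S) hM
  obtain ⟨ic, no, lo, hm⟩ := sfacts2 (S := S) hM
  set x := (algebraMap (MvPolynomial (Fin 2) ℤ) S (MvPolynomial.X 0))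
  set y := (algebraMap (MvPolynomial (Fin 2) ℤ) S (MvPolynomial.X 1))
  have ef : algebraMap (MvPolynomial (Fin 2) ℤ) S (-5 * MvPolynomial.X 0 ^ 3 + 9) = -5 * x ^ 3 + 9 := by
    rw [map_add, map_mul, map_neg, map_ofNat, map_ofNat, map_pow]
  have eg : algebraMap (MvPolynomial (Fin 2) ℤ) S (-2 * MvPolynomial.X 1 ^ 3 + 9) = -2 * y ^ 3 + 9 := by
    rw [map_add, map_mul, map_neg, map_ofNat, map_ofNat, map_pow]
  rw [ef] at hω
  rw [eg] at hμ
  rw [ef, eg]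
  have hmp : (Ideal.span {3, x, y}).IsPrime := by rw [← hm]; exact (IsLocalRing.maximalIdeal.isMaximal S).isPrime
  obtain ⟨h9, kf⟩ := kf_of (L := L) sf hω hμ hKgen
  obtain ⟨u, v, p, q, τ, rf⟩ := rf_of kf
  obtain ⟨r, σ, gf⟩ := rf.gf
  refine ⟨sqfree_of_prime sf.pf, sqfree_of_prime sf.pg, reg_pair sf.pf sf.fg ?_, h9, gf.notCM hmp, gf.freeRes, gf.not_proj hmp.ne_top⟩
  intro htop
  apply hmp.ne_top
  rw [eq_top_iff, ← htop, Ideal.span_le]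
  have m3 : (3 : S) ∈ Ideal.span {3, x, y} := Ideal.subset_span (by simp)
  have mx : x ∈ Ideal.span {3, x, y} := Ideal.subset_span (by simp)
  have my : y ∈ Ideal.span {3, x, y} := Ideal.subset_span (by simp)
  rintro _ (rfl | rfl)
  · have : -5 * x ^ 3 + 9 = (-5 * x ^ 2) * x + 3 * 3 := by ring
    rw [SetLike.mem_coe, this]
    exact Ideal.add_mem _ (Ideal.mul_mem_left _ _ mx) (Ideal.mul_mem_left _ _ m3)
  · have : -2 * y ^ 3 + 9 = (-2 * y ^ 2) * y + 3 * 3 := by ring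
    rw [SetLike.mem_coe, this]
    exact Ideal.add_mem _ (Ideal.mul_mem_left _ _ my) (Ideal.mul_mem_left _ _ m3)
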